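/- arXiv:0802.1496 — 14 statements merged into one kernel-verified Lean document; each statement's English description precedes it below -/
import Mathlib

section
/- Let L be a Lie-like algebra^{1-st} induced by a nonempty set S. Then for all x, y, z ∈ L and all h, k ∈ S one has [[x,y]_h, z]_k = [[x,y]_k, z]_h; that is, the outer and inner bracket indices in an iterated bracket may be interchanged. -/
-- In the Jacobi identities for `(h, k; y, z, x)` and `(k, h; x, y, z)`, the two iterated brackets
-- being compared are a right and a left negative of the same element.
theorem stmt_0_general {L S : Type*} [AddMonoid L] (br : S → L → L → L)
    (jacobi : ∀ (h k : S) (x y z : L),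
      br k (br h x y) z + br h (br k y z) x + br k (br h z x) y = 0)
    (h k : S) (x y z : L) : br k (br h x y) z = br h (br k x y) z := by
  have right_neg : br k (br h y z) x + br h (br k z x) y + br k (br h x y) z = 0 :=
    jacobi h k y z x
  have left_neg : br h (br k x y) z + (br k (br h y z) x + br h (br k z x) y) = 0 := by
    rw [← add_assoc]
    exact jacobi k h x y z
  exact (left_neg_eq_right_neg left_neg right_neg).symm

/-- In a Lie-like algebra^{1-st} induced by a nonempty set `S`,
the outer and inner bracket indices in an iterated bracket may be interchanged:
`[[x,y]_h, z]_k = [[x,y]_k, z]_h`. -/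
theorem stmt_0 (K : Type*) [Field K] (L : Type*) [AddCommGroup L] [Module K L]
    (S : Type*) [Nonempty S]
    (br : S → L →ₗ[K] L →ₗ[K] L)
    (anti : ∀ (k : S) (x y : L), br k x y = - br k y x)
    (jacobi : ∀ (h k : S) (x y z : L),
      br k (br h x y) z + br h (br k y z) x + br k (br h z x) y = 0) :
    ∀ (h k : S) (x y z : L), br k (br h x y) z = br h (br k x y) z :=
  stmt_0_general (fun k x y ↦ br k x y) jacobi
end

section
/- Let L be a Lie-like algebra^{1-st} induced by a nonempty set S, and let L^{ann} be its annihilator, i.e. the subspace of L spanned by all elements [x,y]_h − [x,y]_k with x, y ∈ L and h, k ∈ S. Then L^{ann} is an ideal of L: for every x ∈ L, every a ∈ L^{ann} and every s ∈ S, [x, a]_s ∈ L^{ann}. -/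
/-- The annihilator of a Lie-like algebra^{1-st}: the subspace spanned by all
elements `[x,y]_h - [x,y]_k` with `x, y ∈ L` and `h, k ∈ S`. -/
def likeAnn1 (K : Type*) [Field K] {L : Type*} [AddCommGroup L] [Module K L]
    {S : Type*} (br : S → L →ₗ[K] L →ₗ[K] L) : Submodule K L :=
  Submodule.span K {a : L | ∃ x y : L, ∃ h k : S, a = br h x y - br k x y}

/-!
Modulo the annihilator the outer bracket of `[[x, y]_h, z]_k` may carry any index. The Jacobi-like
identity expresses `[[y, z]_k, x]_h` through double brackets whose inner index is `h` and whose
outer index is `k`. Replacing `k` by `h` in these and applying the identity for the pair `(h, h)`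
shows that the inner index is irrelevant modulo the annihilator as well.
-/

section BracketAnnihilator

variable {R L S : Type*} [CommRing R] [AddCommGroup L] [Module R L]

/-- The annihilator of a family of bilinear operations on a module over a commutative ring: the
smallest submodule modulo which all the operations agree. Over a field it is `likeAnn1`. -/
def bracketAnnihilator (br : S → L →ₗ[R] L →ₗ[R] L) : Submodule R L :=
  Submodule.span R {a : L | ∃ x y : L, ∃ h k : S, a = br h x y - br k x y}

/-- The Jacobi-like identity^{1-st} `[[x, y]_h, z]_k + [[y, z]_k, x]_h + [[z, x]_h, y]_k = 0` for a
family of bilinear operations; `br k x y` stands for `[x, y]_k`. -/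
def JacobiLike (br : S → L →ₗ[R] L →ₗ[R] L) : Prop :=
  ∀ (h k : S) (x y z : L), br k (br h x y) z + br h (br k y z) x + br k (br h z x) y = 0

variable (br : S → L →ₗ[R] L →ₗ[R] L)

theorem bracket_smodEq (h k : S) (x y : L) :
    br h x y ≡ br k x y [SMOD bracketAnnihilator br] :=
  SModEq.sub_mem.mpr (Submodule.subset_span ⟨x, y, h, k, rfl⟩)

variable {br}

theorem bracket_bracket_eq_neg_add (jacobi : JacobiLike br) (h k : S) (x y z : L) :
    br h (br k y z) x = -(br k (br h x y) z + br k (br h z x) y) := by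
  rw [eq_neg_iff_add_eq_zero, ← jacobi h k x y z]
  abel

theorem bracket_bracket_smodEq (jacobi : JacobiLike br) (h k : S) (x y z : L) :
    br h (br k y z) x ≡ br h (br h y z) x [SMOD bracketAnnihilator br] := by
  rw [bracket_bracket_eq_neg_add jacobi h k, bracket_bracket_eq_neg_add jacobi h h]
  exact ((bracket_smodEq br k h _ z).add (bracket_smodEq br k h _ y)).neg

theorem bracket_mem_bracketAnnihilator_of_left_mem (jacobi : JacobiLike br) (s : S) (x : L)
    {a : L} (ha : a ∈ bracketAnnihilator br) : br s a x ∈ bracketAnnihilator br := by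
  suffices bracketAnnihilator br ≤ (bracketAnnihilator br).comap ((br s).flip x) from this ha
  refine Submodule.span_le.mpr ?_
  rintro _ ⟨y, z, h, k, rfl⟩
  have inner_index_irrelevant :
      br s (br h y z) x ≡ br s (br k y z) x [SMOD bracketAnnihilator br] :=
    (bracket_bracket_smodEq jacobi s h x y z).trans (bracket_bracket_smodEq jacobi s k x y z).symm
  simpa only [SetLike.mem_coe, Submodule.mem_comap, LinearMap.flip_apply, map_sub,
    LinearMap.sub_apply] using SModEq.sub_mem.mp inner_index_irrelevant

theorem stmt_1_general (anti : ∀ (k : S) (x y : L), br k x y = -br k y x)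
    (jacobi : JacobiLike br) (x a : L) (s : S) (ha : a ∈ bracketAnnihilator br) :
    br s x a ∈ bracketAnnihilator br := by
  rw [anti s x a]
  exact neg_mem (bracket_mem_bracketAnnihilator_of_left_mem jacobi s x ha)

end BracketAnnihilator

/-- The annihilator of a Lie-like algebra^{1-st} is an ideal. -/
theorem stmt_1 (K : Type*) [Field K] (L : Type*) [AddCommGroup L] [Module K L]
    (S : Type*) [Nonempty S]
    (br : S → L →ₗ[K] L →ₗ[K] L)
    (anti : ∀ (k : S) (x y : L), br k x y = - br k y x)
    (jacobi : ∀ (h k : S) (x y z : L),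
      br k (br h x y) z + br h (br k y z) x + br k (br h z x) y = 0) :
    ∀ (x : L) (a : L) (s : S), a ∈ likeAnn1 K br → br s x a ∈ likeAnn1 K br :=
  stmt_1_general anti jacobi
end

section
/- Let L be a Lie-like algebra^{1-st} induced by a nonempty set S with annihilator L^{ann}. Then on the quotient vector space L/L^{ann} there is a well-defined bilinear bracket given by [x + L^{ann}, y + L^{ann}] := [x,y]_k + L^{ann} for any k ∈ S (the result is independent of the choice of k), and with this bracket L/L^{ann} is a Lie algebra: the bracket is anti-symmetric and satisfies the Jacobi identity. -/
/-! The point is that the annihilator is an ideal for every bracket. Subtracting the Jacobi-like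
identity for `(h, k)` from the one for `(h, h)` leaves `[[y, z]_h - [y, z]_k, x]_h` plus two
differences `[a, b]_h - [a, b]_k`, so bracketing a generator with `x` stays in the annihilator;
anti-symmetry gives the other side. On the quotient all the brackets coincide, and the Jacobi-like
identity with `h = k` becomes the Jacobi identity. -/

section LieLike

variable {R L S : Type*} [CommRing R] [AddCommGroup L] [Module R L]

variable {br : S → L →ₗ[R] L →ₗ[R] L}

theorem bracket_sub_bracket_mem_bracketAnnihilator (h k : S) (x y : L) :
    br h x y - br k x y ∈ bracketAnnihilator br :=
  Submodule.subset_span ⟨x, y, h, k, rfl⟩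

theorem bracket_bracket_sub_bracket_mem_bracketAnnihilator
    (jacobi : JacobiLike br) (h k : S) (x y z : L) :
    br h (br h y z - br k y z) x ∈ bracketAnnihilator br := by
  have jacobi_difference : br h (br h y z - br k y z) x =
      (br k (br h x y) z - br h (br h x y) z) + (br k (br h z x) y - br h (br h z x) y) := by
    rw [map_sub, LinearMap.sub_apply]
    linear_combination (norm := abel) jacobi h h x y z - jacobi h k x y z
  rw [jacobi_difference]
  exact add_mem (bracket_sub_bracket_mem_bracketAnnihilator k h _ _)
    (bracket_sub_bracket_mem_bracketAnnihilator k h _ _)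

theorem bracket_mem_bracketAnnihilator (jacobi : JacobiLike br) (l : S) {a : L}
    (ha : a ∈ bracketAnnihilator br) (x : L) :
    br l a x ∈ bracketAnnihilator br := by
  suffices bracketAnnihilator br ≤ (bracketAnnihilator br).comap ((br l).flip x) from this ha
  refine Submodule.span_le.2 ?_
  rintro _ ⟨y, z, h, k, rfl⟩
  have mem_h := bracket_bracket_sub_bracket_mem_bracketAnnihilator jacobi h k x y z
  have mem_sub := bracket_sub_bracket_mem_bracketAnnihilator (br := br) l h (br h y z - br k y z) x
  exact (Submodule.sub_mem_iff_left _ mem_h).1 mem_sub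

/-- The bracket `[x + L^{ann}, y + L^{ann}] = [x, y]_l + L^{ann}` on `L / L^{ann}`. It is
built from one index `l`, on which it does not depend by `quotientBracket_mk_mk`. -/
def quotientBracket (anti : ∀ (k : S) (x y : L), br k x y = -br k y x)
    (jacobi : JacobiLike br) (l : S) :
    L ⧸ bracketAnnihilator br →ₗ[R] L ⧸ bracketAnnihilator br →ₗ[R] L ⧸ bracketAnnihilator br :=
  LinearMap.IsRefl.liftQ₂ ((br l).compr₂ (bracketAnnihilator br).mkQ) (bracketAnnihilator br)
    (fun x y hxy => by
      rw [LinearMap.compr₂_apply] at hxy ⊢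
      rw [anti, map_neg, hxy, neg_zero])
    fun _ ha => LinearMap.ext fun x =>
      (Submodule.Quotient.mk_eq_zero _).2 (bracket_mem_bracketAnnihilator jacobi l ha x)

theorem quotientBracket_mk_mk (anti : ∀ (k : S) (x y : L), br k x y = -br k y x)
    (jacobi : JacobiLike br) (l k : S) (x y : L) :
    quotientBracket anti jacobi l (Submodule.Quotient.mk x) (Submodule.Quotient.mk y) =
      Submodule.Quotient.mk (br k x y) :=
  (Submodule.Quotient.eq _).2 (bracket_sub_bracket_mem_bracketAnnihilator l k x y)

theorem stmt_2_general [Nonempty S] (anti : ∀ (k : S) (x y : L), br k x y = -br k y x)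
    (jacobi : JacobiLike br) :
    ∃ qbr : (L ⧸ bracketAnnihilator br) →ₗ[R] (L ⧸ bracketAnnihilator br) →ₗ[R]
        (L ⧸ bracketAnnihilator br),
      (∀ (k : S) (x y : L),
        qbr (Submodule.Quotient.mk x) (Submodule.Quotient.mk y)
          = Submodule.Quotient.mk (br k x y)) ∧
      (∀ u v : L ⧸ bracketAnnihilator br, qbr u v = -qbr v u) ∧
      (∀ u v w : L ⧸ bracketAnnihilator br,
        qbr (qbr u v) w + qbr (qbr v w) u + qbr (qbr w u) v = 0) := by
  obtain ⟨l⟩ := ‹Nonempty S›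
  refine ⟨quotientBracket anti jacobi l, quotientBracket_mk_mk anti jacobi l,
    ?antisymmetry, ?jacobi_identity⟩
  case antisymmetry =>
    simp only [Submodule.Quotient.forall]
    intro x y
    rw [quotientBracket_mk_mk anti jacobi l l, quotientBracket_mk_mk anti jacobi l l, anti,
      Submodule.Quotient.mk_neg]
  case jacobi_identity =>
    simp only [Submodule.Quotient.forall, quotientBracket_mk_mk anti jacobi l l]
    intro x y z
    rw [← Submodule.Quotient.mk_add, ← Submodule.Quotient.mk_add, jacobi l l,
      Submodule.Quotient.mk_zero]

end LieLike

/-- On the quotient `L / L^{ann}` there is a well-defined bilinear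
bracket `[x + L^{ann}, y + L^{ann}] = [x,y]_k + L^{ann}` (independent of `k ∈ S`),
and with it `L / L^{ann}` is a Lie algebra: the bracket is anti-symmetric and
satisfies the Jacobi identity. -/
theorem stmt_2 (K : Type*) [Field K] (L : Type*) [AddCommGroup L] [Module K L]
    (S : Type*) [Nonempty S]
    (br : S → L →ₗ[K] L →ₗ[K] L)
    (anti : ∀ (k : S) (x y : L), br k x y = - br k y x)
    (jacobi : ∀ (h k : S) (x y z : L),
      br k (br h x y) z + br h (br k y z) x + br k (br h z x) y = 0) :
    ∃ qbr : (L ⧸ likeAnn1 K br) →ₗ[K] (L ⧸ likeAnn1 K br) →ₗ[K] (L ⧸ likeAnn1 K br),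
      (∀ (k : S) (x y : L),
        qbr (Submodule.Quotient.mk x) (Submodule.Quotient.mk y)
          = Submodule.Quotient.mk (br k x y)) ∧
      (∀ u v : L ⧸ likeAnn1 K br, qbr u v = - qbr v u) ∧
      (∀ u v w : L ⧸ likeAnn1 K br,
        qbr (qbr u v) w + qbr (qbr v w) u + qbr (qbr w u) v = 0) :=
  stmt_2_general anti jacobi
end

section
/- Let L be a Lie-like algebra^{1-st} induced by a nonempty set S and let (V, {f_k}_{k∈S}) be an ordinary module over L. Then the annihilator V^{ann}, i.e. the subspace of V spanned by all vectors (f_h(x) − f_k(x))(v) with x ∈ L, v ∈ V and h, k ∈ S, is an ordinary submodule of V: f_s(x)(V^{ann}) ⊆ V^{ann} for all x ∈ L and s ∈ S. -/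
/-- The annihilator of an ordinary module `(V, {f_k})` over a Lie-like
algebra^{1-st}: the subspace spanned by all `(f_h(x) − f_k(x))(v)`. -/
def modAnn1 (K : Type*) [Field K] {L : Type*} [AddCommGroup L] [Module K L]
    {V : Type*} [AddCommGroup V] [Module K V]
    {S : Type*} (f : S → L →ₗ[K] Module.End K V) : Submodule K V :=
  Submodule.span K {w : V | ∃ x : L, ∃ v : V, ∃ h k : S, w = (f h x - f k x) v}

theorem mul_sub_eq_sub_mul_of_index_swap {S X A : Type*} [NonUnitalNonAssocRing A] {f : S → X → A}
    (hf : ∀ (h k : S) (x y : X), f k x * f h y = f h x * f k y) (s h k : S) (x y : X) :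
    f s x * (f h y - f k y) = (f h x - f k x) * f s y := by
  rw [mul_sub, sub_mul, hf h s, hf k s]

theorem stmt_4_general {R V S X : Type*} [Semiring R] [AddCommGroup V] [Module R V]
    {f : S → X → Module.End R V}
    (hf : ∀ (h k : S) (x y : X), f k x * f h y = f h x * f k y) (s : S) (x : X) :
    Submodule.span R {w : V | ∃ y : X, ∃ v : V, ∃ h k : S, w = (f h y - f k y) v} ∈
      (f s x).invtSubmodule := by
  rw [Module.End.mem_invtSubmodule, Submodule.span_le]
  rintro _ ⟨y, v, h, k, rfl⟩
  have hswap : f s x ((f h y - f k y) v) = (f h x - f k x) (f s y v) :=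
    LinearMap.congr_fun (mul_sub_eq_sub_mul_of_index_swap hf s h k x y) v
  exact Submodule.subset_span ⟨x, f s y v, h, k, hswap⟩

/-- The annihilator of an ordinary module over a Lie-like
algebra^{1-st} is an ordinary submodule. -/
theorem stmt_4 (K : Type*) [Field K] (L : Type*) [AddCommGroup L] [Module K L]
    (S : Type*) [Nonempty S]
    (br : S → L →ₗ[K] L →ₗ[K] L)
    (anti : ∀ (k : S) (x y : L), br k x y = - br k y x)
    (jacobi : ∀ (h k : S) (x y z : L),
      br k (br h x y) z + br h (br k y z) x + br k (br h z x) y = 0)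
    (V : Type*) [AddCommGroup V] [Module K V]
    (f : S → L →ₗ[K] Module.End K V)
    (hmod1 : ∀ (h k : S) (x y : L), f h (br k x y) = f h x * f k y - f h y * f k x)
    (hmod2 : ∀ (h k : S) (x y : L), f k x * f h y = f h x * f k y) :
    ∀ (s : S) (x : L) (v : V), v ∈ modAnn1 K f → f s x v ∈ modAnn1 K f :=
  fun s x _ hv ↦ stmt_4_general hmod2 s x hv
end

section
/- Let L be a Lie-like algebra^{2-nd} induced by a nonempty set S. Then for all x, y, z ∈ L and all h, k ∈ S one has ⟨x, ⟨y,z⟩_h⟩_k + ⟨x, ⟨z,y⟩_k⟩_h = 0. -/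
theorem stmt_5_general {L : Type*} [AddRightCancelMonoid L] {f g : L → L → L}
    (leib_fg : ∀ x y z, f (g x y) z = g x (f y z) + g (f x z) y)
    (leib_gf : ∀ x y z, g (f x y) z = f x (g y z) + f (g x z) y) (x y z : L) :
    g x (f y z) + f x (g z y) = 0 := by
  -- Expanding `f (g x y) z` by one identity and then by the other returns the same term.
  suffices g x (f y z) + f x (g z y) + f (g x y) z = f (g x y) z from add_eq_right.mp this
  calc
    g x (f y z) + f x (g z y) + f (g x y) z
      = g x (f y z) + (f x (g z y) + f (g x y) z) := add_assoc _ _ _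
    _ = g x (f y z) + g (f x z) y := by rw [leib_gf x z y]
    _ = f (g x y) z := (leib_fg x y z).symm

/-- In a Lie-like algebra^{2-nd} induced by a nonempty set `S`,
for all `x, y, z ∈ L` and `h, k ∈ S` one has
`⟨x, ⟨y,z⟩_h⟩_k + ⟨x, ⟨z,y⟩_k⟩_h = 0`. -/
theorem stmt_5 (K : Type*) [Field K] (L : Type*) [AddCommGroup L] [Module K L]
    (S : Type*) [Nonempty S]
    (ang : S → L →ₗ[K] L →ₗ[K] L)
    (leib : ∀ (h k : S) (x y z : L),
      ang h (ang k x y) z = ang k x (ang h y z) + ang k (ang h x z) y)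
    (swap : ∀ (h k : S) (x y z : L),
      ang h (ang k x y) z = ang k (ang h x y) z) :
    ∀ (h k : S) (x y z : L),
      ang k x (ang h y z) + ang h x (ang k z y) = 0 := by
  intro h k
  exact stmt_5_general (leib h k) (leib k h)
end

section
/- Let L be a Lie-like algebra^{2-nd} induced by a nonempty set S, and let L^{ann,+} be its plus annihilator, i.e. the subspace of L spanned by all elements ⟨x,y⟩_h + ⟨y,x⟩_k with x, y ∈ L and h, k ∈ S. Then L^{ann,+} is an ideal of L: ⟨a, x⟩_s ∈ L^{ann,+} and ⟨x, a⟩_s ∈ L^{ann,+} for all x ∈ L, a ∈ L^{ann,+} and s ∈ S. -/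
/-- The plus annihilator of a Lie-like algebra^{2-nd}: the subspace spanned by
all elements `⟨x,y⟩_h + ⟨y,x⟩_k` with `x, y ∈ L` and `h, k ∈ S`. -/
def likeAnnPlus2 (K : Type*) [Field K] {L : Type*} [AddCommGroup L] [Module K L]
    {S : Type*} (ang : S → L →ₗ[K] L →ₗ[K] L) : Submodule K L :=
  Submodule.span K {a : L | ∃ x y : L, ∃ h k : S, a = ang h x y + ang k y x}

/-! For fixed `s` and `z`, the Jacobi-like identity says that `⟨·, z⟩_s` is a derivation of every
bracket. A common derivation sends each symmetrized product to a sum of two symmetrized products,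
so it preserves their span. Modulo that span every product is antisymmetric, even when the two
brackets differ, which transfers the closure property from one side to the other. -/

section PlusAnnihilator

variable {R S L : Type*}

section Semiring

variable [CommSemiring R] [AddCommMonoid L] [Module R L]

/-- The plus annihilator of a family of bilinear operations on a module over a commutative
semiring, of which `likeAnnPlus2` is the case of a vector space. -/
def plusAnnihilator (ang : S → L →ₗ[R] L →ₗ[R] L) : Submodule R L :=
  Submodule.span R {a : L | ∃ x y : L, ∃ h k : S, a = ang h x y + ang k y x}

theorem add_swap_mem_plusAnnihilator (ang : S → L →ₗ[R] L →ₗ[R] L) (h k : S) (x y : L) :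
    ang h x y + ang k y x ∈ plusAnnihilator ang :=
  Submodule.subset_span ⟨x, y, h, k, rfl⟩

theorem plusAnnihilator_le_comap_of_derivation {ang : S → L →ₗ[R] L →ₗ[R] L} {D : L →ₗ[R] L}
    (hD : ∀ (k : S) (x y : L), D (ang k x y) = ang k x (D y) + ang k (D x) y) :
    plusAnnihilator ang ≤ (plusAnnihilator ang).comap D := by
  refine Submodule.span_le.mpr ?_
  rintro _ ⟨x, y, h, k, rfl⟩
  have map_generator : D (ang h x y + ang k y x) =
      (ang h x (D y) + ang k (D y) x) + (ang h (D x) y + ang k y (D x)) := by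
    rw [map_add, hD, hD]
    abel
  rw [SetLike.mem_coe, Submodule.mem_comap, map_generator]
  exact add_mem (add_swap_mem_plusAnnihilator ang h k x (D y))
    (add_swap_mem_plusAnnihilator ang h k (D x) y)

end Semiring

variable [CommRing R] [AddCommGroup L] [Module R L] {ang : S → L →ₗ[R] L →ₗ[R] L}

theorem apply_mem_plusAnnihilator_comm {h k : S} {x y : L} :
    ang h x y ∈ plusAnnihilator ang ↔ ang k y x ∈ plusAnnihilator ang :=
  have sum_mem := add_swap_mem_plusAnnihilator ang h k x y
  ⟨fun hxy ↦ (Submodule.add_mem_iff_right _ hxy).mp sum_mem,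
    fun hyx ↦ (Submodule.add_mem_iff_left _ hyx).mp sum_mem⟩

theorem stmt_6_general
    (leib : ∀ (h k : S) (x y z : L),
      ang h (ang k x y) z = ang k x (ang h y z) + ang k (ang h x z) y)
    (x a : L) (s : S) (ha : a ∈ plusAnnihilator ang) :
    ang s a x ∈ plusAnnihilator ang ∧ ang s x a ∈ plusAnnihilator ang := by
  have apply_left_mem : ang s a x ∈ plusAnnihilator ang :=
    plusAnnihilator_le_comap_of_derivation (D := (ang s).flip x)
      (fun k y z ↦ leib s k y z x) ha
  exact ⟨apply_left_mem, apply_mem_plusAnnihilator_comm.mp apply_left_mem⟩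

end PlusAnnihilator

/-- The plus annihilator of a Lie-like algebra^{2-nd} is an ideal:
`⟨a, x⟩_s ∈ L^{ann,+}` and `⟨x, a⟩_s ∈ L^{ann,+}` for `x ∈ L`, `a ∈ L^{ann,+}`,
`s ∈ S`. -/
theorem stmt_6 (K : Type*) [Field K] (L : Type*) [AddCommGroup L] [Module K L]
    (S : Type*) [Nonempty S]
    (ang : S → L →ₗ[K] L →ₗ[K] L)
    (leib : ∀ (h k : S) (x y z : L),
      ang h (ang k x y) z = ang k x (ang h y z) + ang k (ang h x z) y)
    (swap : ∀ (h k : S) (x y z : L),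
      ang h (ang k x y) z = ang k (ang h x y) z) :
    ∀ (x : L) (a : L) (s : S), a ∈ likeAnnPlus2 K ang →
      ang s a x ∈ likeAnnPlus2 K ang ∧ ang s x a ∈ likeAnnPlus2 K ang :=
  stmt_6_general leib
end

section
/- Let L be a Lie-like algebra^{2-nd} induced by a nonempty set S with minus annihilator L^{ann,−}. Then on the quotient vector space L/L^{ann,−} there is a well-defined bilinear operation ⟨x + L^{ann,−}, y + L^{ann,−}⟩ := ⟨x,y⟩_k + L^{ann,−} for any k ∈ S (independent of the choice of k), and with this operation L/L^{ann,−} is a Leibniz algebra: ⟨⟨u,v⟩, w⟩ = ⟨u, ⟨v,w⟩⟩ + ⟨⟨u,w⟩, v⟩ for all u, v, w in the quotient. -/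
/-- The minus annihilator of a Lie-like algebra^{2-nd}: the subspace spanned by
all elements `⟨x,y⟩_h − ⟨x,y⟩_k` with `x, y ∈ L` and `h, k ∈ S`. -/
def likeAnnMinus2 (K : Type*) [Field K] {L : Type*} [AddCommGroup L] [Module K L]
    {S : Type*} (ang : S → L →ₗ[K] L →ₗ[K] L) : Submodule K L :=
  Submodule.span K {a : L | ∃ x y : L, ∃ h k : S, a = ang h x y - ang k x y}

/-!
Put `d = ⟨x,y⟩_h − ⟨x,y⟩_k`. Expanding both terms of `⟨d, z⟩_j` by the Jacobi-like identity gives a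
sum of two differences of brackets with indices `h` and `k`, so the minus annihilator is stable
under right multiplication. Solving the identity for its first summand writes `⟨z, d⟩_j` as such a
difference minus `⟨⟨z,y⟩_h − ⟨z,y⟩_k, x⟩_j`, which reduces left multiplication to the previous case.
Modulo this two-sided ideal all brackets agree, and the case `h = k` is the Leibniz identity.
-/

section LeibnizQuotient

variable {R L : Type*} [CommRing R] [AddCommGroup L] [Module R L]

/-- The (right) Leibniz identity, expressing that the bilinear operation `B` makes `L` a Leibniz
algebra: every right multiplication `B · z` is a derivation. -/
def IsLeibniz (B : L →ₗ[R] L →ₗ[R] L) : Prop :=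
  ∀ x y z : L, B (B x y) z = B x (B y z) + B (B x z) y

/-- The bilinear operation induced by `B` on the quotient of `L` by a two-sided ideal `I`. The ideal
is encoded as a submodule together with its stability under multiplication from either side. -/
def quotientBilin (B : L →ₗ[R] L →ₗ[R] L) (I : Submodule R L)
    (mul_right_mem : ∀ a ∈ I, ∀ z, B a z ∈ I) (mul_left_mem : ∀ a ∈ I, ∀ z, B z a ∈ I) :
    L ⧸ I →ₗ[R] L ⧸ I →ₗ[R] L ⧸ I :=
  (B.compr₂ I.mkQ).liftQ₂ I I
    (fun a ha ↦ LinearMap.ext fun z ↦ (Submodule.Quotient.mk_eq_zero I).2 (mul_right_mem a ha z))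
    (fun a ha ↦ LinearMap.ext fun z ↦ (Submodule.Quotient.mk_eq_zero I).2 (mul_left_mem a ha z))

variable {B : L →ₗ[R] L →ₗ[R] L} {I : Submodule R L}
  (mul_right_mem : ∀ a ∈ I, ∀ z, B a z ∈ I) (mul_left_mem : ∀ a ∈ I, ∀ z, B z a ∈ I)

theorem quotientBilin_mk (x y : L) :
    quotientBilin B I mul_right_mem mul_left_mem
      (Submodule.Quotient.mk x) (Submodule.Quotient.mk y) = Submodule.Quotient.mk (B x y) :=
  rfl

theorem IsLeibniz.quotientBilin (hB : IsLeibniz B) :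
    IsLeibniz (quotientBilin B I mul_right_mem mul_left_mem) := by
  intro u v w
  induction u using Submodule.Quotient.induction_on with | H x
  induction v using Submodule.Quotient.induction_on with | H y
  induction w using Submodule.Quotient.induction_on with | H z
  simp only [quotientBilin_mk, hB x y z, Submodule.Quotient.mk_add]

end LeibnizQuotient

section MinusAnnihilator

variable {R L S : Type*} [CommRing R] [AddCommGroup L] [Module R L]
  {ang : S → L →ₗ[R] L →ₗ[R] L}

/-- The Jacobi-like identity^{2-nd} for a family of bilinear operations: the Leibniz identity with
an independent index for each of the two operations involved. -/
def IsJacobiLike (ang : S → L →ₗ[R] L →ₗ[R] L) : Prop :=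
  ∀ (h k : S) (x y z : L),
    ang h (ang k x y) z = ang k x (ang h y z) + ang k (ang h x z) y

/-- The minus annihilator `likeAnnMinus2` over an arbitrary commutative ring of scalars. -/
def minusAnnihilator (ang : S → L →ₗ[R] L →ₗ[R] L) : Submodule R L :=
  Submodule.span R {a : L | ∃ x y : L, ∃ h k : S, a = ang h x y - ang k x y}

theorem sub_mem_minusAnnihilator (h k : S) (x y : L) :
    ang h x y - ang k x y ∈ minusAnnihilator ang :=
  Submodule.subset_span ⟨x, y, h, k, rfl⟩

theorem minusAnnihilator_le {p : Submodule R L}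
    (hp : ∀ (h k : S) (x y : L), ang h x y - ang k x y ∈ p) : minusAnnihilator ang ≤ p :=
  Submodule.span_le.2 <| by
    rintro _ ⟨x, y, h, k, rfl⟩
    exact hp h k x y

namespace IsJacobiLike

theorem isLeibniz (hang : IsJacobiLike ang) (k : S) : IsLeibniz (ang k) :=
  hang k k

theorem mul_right_mem_minusAnnihilator (hang : IsJacobiLike ang) (j : S) :
    ∀ a ∈ minusAnnihilator ang, ∀ z, ang j a z ∈ minusAnnihilator ang := by
  intro a ha z
  suffices minusAnnihilator ang ≤ (minusAnnihilator ang).comap ((ang j).flip z) from this ha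
  refine minusAnnihilator_le fun h k x y ↦ ?_
  have expand : ang j (ang h x y - ang k x y) z =
      (ang h x (ang j y z) - ang k x (ang j y z)) +
        (ang h (ang j x z) y - ang k (ang j x z) y) := by
    rw [map_sub, LinearMap.sub_apply, hang j h, hang j k]
    abel
  rw [Submodule.mem_comap, LinearMap.flip_apply, expand]
  exact add_mem (sub_mem_minusAnnihilator h k _ _) (sub_mem_minusAnnihilator h k _ _)

theorem mul_left_mem_minusAnnihilator (hang : IsJacobiLike ang) (j : S) :
    ∀ a ∈ minusAnnihilator ang, ∀ z, ang j z a ∈ minusAnnihilator ang := by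
  intro a ha z
  suffices minusAnnihilator ang ≤ (minusAnnihilator ang).comap (ang j z) from this ha
  refine minusAnnihilator_le fun h k x y ↦ ?_
  have expand : ang j z (ang h x y - ang k x y) =
      (ang h (ang j z x) y - ang k (ang j z x) y) - ang j (ang h z y - ang k z y) x := by
    rw [hang h j, hang k j, map_sub, map_sub, LinearMap.sub_apply]
    abel
  rw [Submodule.mem_comap, expand]
  exact sub_mem (sub_mem_minusAnnihilator h k _ _)
    (hang.mul_right_mem_minusAnnihilator j _ (sub_mem_minusAnnihilator h k z y) x)

end IsJacobiLike

theorem stmt_9_general [Nonempty S] (hang : IsJacobiLike ang) :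
    ∃ qang : (L ⧸ minusAnnihilator ang) →ₗ[R] (L ⧸ minusAnnihilator ang) →ₗ[R]
        (L ⧸ minusAnnihilator ang),
      (∀ (k : S) (x y : L),
        qang (Submodule.Quotient.mk x) (Submodule.Quotient.mk y)
          = Submodule.Quotient.mk (ang k x y)) ∧
      IsLeibniz qang := by
  obtain ⟨k₀⟩ := ‹Nonempty S›
  refine ⟨quotientBilin (ang k₀) (minusAnnihilator ang) (hang.mul_right_mem_minusAnnihilator k₀)
    (hang.mul_left_mem_minusAnnihilator k₀), fun k x y ↦ ?_, (hang.isLeibniz k₀).quotientBilin _ _⟩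
  rw [quotientBilin_mk, Submodule.Quotient.eq]
  exact sub_mem_minusAnnihilator k₀ k x y

end MinusAnnihilator

/-- On the quotient `L / L^{ann,−}` there is a well-defined bilinear
operation `⟨x + L^{ann,−}, y + L^{ann,−}⟩ = ⟨x,y⟩_k + L^{ann,−}` (independent of
`k ∈ S`), making `L / L^{ann,−}` a Leibniz algebra:
`⟨⟨u,v⟩, w⟩ = ⟨u, ⟨v,w⟩⟩ + ⟨⟨u,w⟩, v⟩`. -/
theorem stmt_9 (K : Type*) [Field K] (L : Type*) [AddCommGroup L] [Module K L]
    (S : Type*) [Nonempty S]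
    (ang : S → L →ₗ[K] L →ₗ[K] L)
    (leib : ∀ (h k : S) (x y z : L),
      ang h (ang k x y) z = ang k x (ang h y z) + ang k (ang h x z) y)
    (swap : ∀ (h k : S) (x y z : L),
      ang h (ang k x y) z = ang k (ang h x y) z) :
    ∃ qang : (L ⧸ likeAnnMinus2 K ang) →ₗ[K] (L ⧸ likeAnnMinus2 K ang) →ₗ[K]
        (L ⧸ likeAnnMinus2 K ang),
      (∀ (k : S) (x y : L),
        qang (Submodule.Quotient.mk x) (Submodule.Quotient.mk y)
          = Submodule.Quotient.mk (ang k x y)) ∧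
      (∀ u v w : L ⧸ likeAnnMinus2 K ang,
        qang (qang u v) w = qang u (qang v w) + qang (qang u w) v) :=
  stmt_9_general leib
end

section
/- Let L be a Lie-like algebra^{2-nd} induced by a nonempty set S. For k ∈ S define the right multiplication r_k(x) : a ↦ ⟨a, x⟩_k and the left multiplication ℓ_k(x) : a ↦ ⟨x, a⟩_k. Then setting f_k := −r_k and g_k := ℓ_k makes L an ordinary module over itself; explicitly, for all x, y ∈ L and h, k ∈ S: f_h(⟨x,y⟩_k) = f_h(x)∘f_k(y) − f_k(y)∘f_h(x); g_h(⟨x,y⟩_k) = g_h(x)∘f_k(y) − f_k(y)∘g_h(x); g_k(x)∘g_h(y) = g_h(x)∘f_k(y) = g_k(x)∘f_h(y); f_k(x)∘f_h(y) = f_h(x)∘f_k(y); and f_k(x)∘g_h(y) = f_h(x)∘g_k(y). -/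
/-!
The Jacobi-like identity for `(h, k)` says that every right multiplication `⟨·, z⟩_h` is a
derivation of `⟨·,·⟩_k`. Solved for its two summands on the right, it gives the commutator formulas
for right and left multiplications. Using it for both `(h, k)` and `(k, h)` eliminates the
left-nested products and leaves `⟨x, ⟨y, a⟩_h⟩_k = -⟨x, ⟨a, y⟩_k⟩_h`; the remaining identities
come from the freedom to swap the indices of a left-nested product.
-/

section Brackets

variable {K L : Type*} [CommSemiring K] [AddCommGroup L] [Module K L]

/-- The Jacobi-like identity^{2-nd} for a pair of products: each right multiplication `c · z` is a
derivation of `b`. -/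
def IsRightDerivation (b c : L →ₗ[K] L →ₗ[K] L) : Prop :=
  ∀ x y z, c (b x y) z = b x (c y z) + b (c x z) y

/-- Axiom (ii) of a Lie-like algebra^{2-nd} for a pair of products: in a left-nested product of
three elements, `b` and `c` may be swapped. -/
def IsInterchangeable (b c : L →ₗ[K] L →ₗ[K] L) : Prop :=
  ∀ x y z, c (b x y) z = b (c x y) z

variable {b c : L →ₗ[K] L →ₗ[K] L}

namespace IsRightDerivation

theorem flip_apply_apply (hbc : IsRightDerivation b c) (x y : L) :
    (b.flip (c x y) : Module.End K L) = c.flip y * b.flip x - b.flip x * c.flip y := by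
  ext a
  exact eq_sub_of_add_eq (hbc a x y).symm

theorem apply_apply (hbc : IsRightDerivation b c) (x y : L) :
    (b (c x y) : Module.End K L) = c.flip y * b x - b x * c.flip y := by
  ext a
  exact eq_sub_of_add_eq' (hbc x a y).symm

theorem mul_eq_neg_mul_flip (hbc : IsRightDerivation b c) (hcb : IsRightDerivation c b) (x y : L) :
    (b x * c y : Module.End K L) = -(c x * b.flip y) := by
  ext a
  have cancel : c (b x y) a = b x (c y a) + (c x (b a y) + c (b x y) a) := by
    rw [← hcb x a y, ← hbc x y a]
  rw [← add_assoc, right_eq_add] at cancel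
  exact eq_neg_of_add_eq_zero_left cancel

theorem mul_flip_comm (hbc : IsRightDerivation b c) (hcb : IsRightDerivation c b)
    (swap : IsInterchangeable b c) (x y : L) :
    (c x * b.flip y : Module.End K L) = b x * c.flip y := by
  ext a
  have expand : c x (b a y) + c (b x y) a = b x (c a y) + c (b x y) a :=
    calc c x (b a y) + c (b x y) a
      _ = b (c x a) y := (hcb x a y).symm
      _ = c (b x a) y := (swap x a y).symm
      _ = b x (c a y) + b (c x y) a := hbc x a y
      _ = b x (c a y) + c (b x y) a := by rw [swap x y a]
  exact add_right_cancel expand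

end IsRightDerivation

namespace IsInterchangeable

theorem flip_mul_flip (swap : IsInterchangeable b c) (x y : L) :
    (b.flip x * c.flip y : Module.End K L) = c.flip x * b.flip y := by
  ext a
  exact (swap a y x).symm

theorem flip_mul (swap : IsInterchangeable b c) (x y : L) :
    (b.flip x * c y : Module.End K L) = c.flip x * b y := by
  ext a
  exact (swap y a x).symm

end IsInterchangeable

end Brackets

section LieLike

variable {K L V S : Type*} [CommSemiring K] [AddCommGroup L] [Module K L]
  [AddCommGroup V] [Module K V]

/-- `L` with the products `ang k x y = ⟨x, y⟩_k` is a Lie-like algebra^{2-nd} induced by `S`. -/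
structure IsLieLikeAlgebra (ang : S → L →ₗ[K] L →ₗ[K] L) : Prop where
  jacobi : ∀ h k, IsRightDerivation (ang k) (ang h)
  swap : ∀ h k, IsInterchangeable (ang k) (ang h)

/-- `V` with the actions `f` and `g` is an ordinary module over `L` with the products `ang`. The
double equation `g_k(x) g_h(y) = g_h(x) f_k(y) = g_k(x) f_h(y)` is split into `g_mul_g` and
`g_mul_f`. -/
structure IsOrdinaryModule (ang : S → L →ₗ[K] L →ₗ[K] L) (f g : S → L →ₗ[K] Module.End K V) :
    Prop where
  f_bracket : ∀ h k x y, f h (ang k x y) = f h x * f k y - f k y * f h x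
  g_bracket : ∀ h k x y, g h (ang k x y) = g h x * f k y - f k y * g h x
  g_mul_g : ∀ h k x y, g k x * g h y = g h x * f k y
  g_mul_f : ∀ h k x y, g h x * f k y = g k x * f h y
  f_mul_f : ∀ h k x y, f k x * f h y = f h x * f k y
  f_mul_g : ∀ h k x y, f k x * g h y = f h x * g k y

theorem stmt_10_general {ang : S → L →ₗ[K] L →ₗ[K] L} (hL : IsLieLikeAlgebra ang)
    {f g : S → L →ₗ[K] Module.End K L} (hf : ∀ k x a, f k x a = -ang k a x)
    (hg : ∀ k x a, g k x a = ang k x a) : IsOrdinaryModule ang f g := by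
  have f_eq (k : S) (x : L) : f k x = -(ang k).flip x := LinearMap.ext (hf k x)
  have g_eq (k : S) (x : L) : g k x = ang k x := LinearMap.ext (hg k x)
  constructor <;> intro h k x y <;>
    simp only [f_eq, g_eq, neg_mul, mul_neg, neg_neg, neg_inj, sub_neg_eq_add]
  case f_bracket => rw [(hL.jacobi k h).flip_apply_apply, neg_sub]
  case g_bracket => rw [(hL.jacobi k h).apply_apply, neg_add_eq_sub]
  case g_mul_g => exact (hL.jacobi h k).mul_eq_neg_mul_flip (hL.jacobi k h) x y
  case g_mul_f => exact (hL.jacobi h k).mul_flip_comm (hL.jacobi k h) (hL.swap h k) x y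
  case f_mul_f => exact (hL.swap h k).flip_mul_flip x y
  case f_mul_g => exact (hL.swap h k).flip_mul x y

end LieLike

/-- For a Lie-like algebra^{2-nd} `L` induced by `S`, setting
`f_k := −r_k` (negated right multiplication) and `g_k := ℓ_k` (left
multiplication) makes `L` an ordinary module over itself; explicitly all five
ordinary-module identities hold. -/
theorem stmt_10 (K : Type*) [Field K] (L : Type*) [AddCommGroup L] [Module K L]
    (S : Type*) [Nonempty S]
    (ang : S → L →ₗ[K] L →ₗ[K] L)
    (leib : ∀ (h k : S) (x y z : L),
      ang h (ang k x y) z = ang k x (ang h y z) + ang k (ang h x z) y)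
    (swap : ∀ (h k : S) (x y z : L),
      ang h (ang k x y) z = ang k (ang h x y) z)
    (f g : S → L →ₗ[K] Module.End K L)
    (hf : ∀ (k : S) (x a : L), f k x a = - ang k a x)
    (hg : ∀ (k : S) (x a : L), g k x a = ang k x a) :
    ∀ (h k : S) (x y : L),
      (f h (ang k x y) = f h x * f k y - f k y * f h x) ∧
      (g h (ang k x y) = g h x * f k y - f k y * g h x) ∧
      (g k x * g h y = g h x * f k y) ∧
      (g h x * f k y = g k x * f h y) ∧
      (f k x * f h y = f h x * f k y) ∧
      (f k x * g h y = f h x * g k y) := by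
  have module_self : IsOrdinaryModule ang f g := stmt_10_general ⟨leib, swap⟩ hf hg
  exact fun h k x y ↦ ⟨module_self.f_bracket h k x y, module_self.g_bracket h k x y,
    module_self.g_mul_g h k x y, module_self.g_mul_f h k x y,
    module_self.f_mul_f h k x y, module_self.f_mul_g h k x y⟩
end

section
/- Let L be a Lie-like algebra^{2-nd} induced by a nonempty set S and let (V, {f_k}, {g_k}_{k∈S}) be an ordinary module over L. Define the plus annihilator V^{ann,+} as the subspace of V spanned by all vectors (g_h(x) − f_k(x))(v), and the minus annihilator V^{ann,−} as the subspace spanned by all vectors (f_h(x) − f_k(x))(v) and (g_h(x) − g_k(x))(v), where x ∈ L, v ∈ V, h, k ∈ S. Then V^{ann,+} and V^{ann,−} are both ordinary submodules of V, and V^{ann,−} ⊆ V^{ann,+}. -/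
/-- The plus annihilator of an ordinary module `(V, {f_k}, {g_k})` over a
Lie-like algebra^{2-nd}: the subspace spanned by all `(g_h(x) − f_k(x))(v)`. -/
def modAnnPlus2 (K : Type*) [Field K] {L : Type*} [AddCommGroup L] [Module K L]
    {V : Type*} [AddCommGroup V] [Module K V]
    {S : Type*} (f g : S → L →ₗ[K] Module.End K V) : Submodule K V :=
  Submodule.span K {w : V | ∃ x : L, ∃ v : V, ∃ h k : S, w = (g h x - f k x) v}

/-- The minus annihilator of an ordinary module `(V, {f_k}, {g_k})` over a
Lie-like algebra^{2-nd}: the subspace spanned by all `(f_h(x) − f_k(x))(v)` and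
`(g_h(x) − g_k(x))(v)`. -/
def modAnnMinus2 (K : Type*) [Field K] {L : Type*} [AddCommGroup L] [Module K L]
    {V : Type*} [AddCommGroup V] [Module K V]
    {S : Type*} (f g : S → L →ₗ[K] Module.End K V) : Submodule K V :=
  Submodule.span K ({w : V | ∃ x : L, ∃ v : V, ∃ h k : S, w = (f h x - f k x) v} ∪
    {w : V | ∃ x : L, ∃ v : V, ∃ h k : S, w = (g h x - g k x) v})

/-!
For two families `T`, `U` of endomorphisms, let `D(T, U)` be the span of the vectors
`T_h(y) v - U_k(y) v`; the plus annihilator is `D(g, f)` and the minus annihilator is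
`D(f, f) + D(g, g)`. The axioms for `f_h(⟨y, x⟩_s)` and `g_h(⟨y, x⟩_s)` say that moving `f_s(x)`
past `f_h(y)` or `g_h(y)` costs only a term of the same kind with `y` replaced by `⟨y, x⟩_s`,
which does not depend on `h`; hence each `D(T, U)` is stable under `f_s(x)`. Stability of `D(g, f)` under `g_s(x)`
follows, since `g_s(x) - f_s(x)` maps all of `V` into it. Finally, both `g_s(x) f_h(y)` and
`g_s(x) g_h(y)` equal `g_h(x) f_s(y)`, so `g_s(x)` maps `D(f, f)` and `D(g, g)` into `D(g, g)`.
-/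

section DifferenceSpan

variable {R M L S : Type*} [Ring R] [AddCommGroup M] [Module R M]

/-- The span of the differences `T h x v - U k x v` of two families of endomorphisms, taken at the
same argument `x` and vector `v` but at arbitrary indices `h` and `k`. It is the common building
block of the plus and minus annihilators. -/
def differenceSpan (T U : S → L → Module.End R M) : Submodule R M :=
  Submodule.span R {w | ∃ x v h k, w = (T h x - U k x) v}

variable {T U : S → L → Module.End R M}

theorem sub_mem_differenceSpan (T U : S → L → Module.End R M) (h k : S) (x : L) (v : M) :
    T h x v - U k x v ∈ differenceSpan T U :=
  Submodule.subset_span ⟨x, v, h, k, rfl⟩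

theorem differenceSpan_le_iff {N : Submodule R M} :
    differenceSpan T U ≤ N ↔ ∀ h k x v, T h x v - U k x v ∈ N := by
  refine ⟨fun hN h k x v => hN (sub_mem_differenceSpan T U h k x v), fun hN => ?_⟩
  refine Submodule.span_le.2 ?_
  rintro _ ⟨x, v, h, k, rfl⟩
  exact hN h k x v

theorem differenceSpan_self_le_left : differenceSpan T T ≤ differenceSpan T U :=
  differenceSpan_le_iff.2 fun h k x v => by
    simpa only [sub_sub_sub_cancel_right] using
      sub_mem (sub_mem_differenceSpan T U h h x v) (sub_mem_differenceSpan T U k h x v)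

theorem differenceSpan_self_le_right : differenceSpan U U ≤ differenceSpan T U :=
  differenceSpan_le_iff.2 fun h k x v => by
    simpa only [sub_sub_sub_cancel_left] using
      sub_mem (sub_mem_differenceSpan T U h k x v) (sub_mem_differenceSpan T U h h x v)

theorem differenceSpan_mem_invtSubmodule_of_commutator {φ : Module.End R M} {δ : L → L}
    (hT : ∀ h y, T h (δ y) = T h y * φ - φ * T h y)
    (hU : ∀ k y, U k (δ y) = U k y * φ - φ * U k y) :
    differenceSpan T U ∈ φ.invtSubmodule := by
  refine differenceSpan_le_iff.2 fun h k y v => ?_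
  have hφ : φ (T h y v - U k y v) =
      (T h y (φ v) - U k y (φ v)) - (T h (δ y) v - U k (δ y) v) := by
    simp only [hT, hU, LinearMap.sub_apply, Module.End.mul_apply, map_sub]
    abel
  rw [Submodule.mem_comap, hφ]
  exact sub_mem (sub_mem_differenceSpan T U h k y (φ v)) (sub_mem_differenceSpan T U h k (δ y) v)

theorem differenceSpan_mem_invtSubmodule_left_of_right {h k : S} {x : L}
    (hU : differenceSpan T U ∈ (U k x).invtSubmodule) :
    differenceSpan T U ∈ (T h x).invtSubmodule := fun v hv => by
  simpa only [Submodule.mem_comap, sub_add_cancel] using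
    add_mem (sub_mem_differenceSpan T U h k x v) (hU hv)

theorem differenceSpan_self_le_comap {ψ : Module.End R M} {χ : L → Module.End R M} {x : L}
    (hψ : ∀ h y, ψ * T h y = U h x * χ y) :
    differenceSpan T T ≤ (differenceSpan U U).comap ψ := by
  refine differenceSpan_le_iff.2 fun h k y v => ?_
  have hψv (h : S) : ψ (T h y v) = U h x (χ y v) := LinearMap.congr_fun (hψ h y) v
  rw [Submodule.mem_comap, map_sub, hψv, hψv]
  exact sub_mem_differenceSpan U U h k x (χ y v)

end DifferenceSpan

section Annihilators

variable {K L V S : Type*} [Field K] [AddCommGroup L] [Module K L] [AddCommGroup V] [Module K V]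

theorem modAnnPlus2_eq_differenceSpan (f g : S → L →ₗ[K] Module.End K V) :
    modAnnPlus2 K f g = differenceSpan (g · ·) (f · ·) :=
  rfl

theorem modAnnMinus2_eq_sup_differenceSpan (f g : S → L →ₗ[K] Module.End K V) :
    modAnnMinus2 K f g = differenceSpan (f · ·) (f · ·) ⊔ differenceSpan (g · ·) (g · ·) :=
  Submodule.span_union _ _

theorem modAnnMinus2_le_modAnnPlus2 (f g : S → L →ₗ[K] Module.End K V) :
    modAnnMinus2 K f g ≤ modAnnPlus2 K f g := by
  rw [modAnnMinus2_eq_sup_differenceSpan, modAnnPlus2_eq_differenceSpan]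
  exact sup_le differenceSpan_self_le_right differenceSpan_self_le_left

variable {f g : S → L →ₗ[K] Module.End K V}

theorem modAnnPlus2_mem_invtSubmodule_of_commutator {φ : Module.End K V} {δ : L → L}
    (hf : ∀ h y, f h (δ y) = f h y * φ - φ * f h y)
    (hg : ∀ h y, g h (δ y) = g h y * φ - φ * g h y) :
    modAnnPlus2 K f g ∈ φ.invtSubmodule := by
  rw [modAnnPlus2_eq_differenceSpan]
  exact differenceSpan_mem_invtSubmodule_of_commutator hg hf

theorem modAnnPlus2_mem_invtSubmodule_right_of_left {h k : S} {x : L}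
    (hf : modAnnPlus2 K f g ∈ (f k x).invtSubmodule) :
    modAnnPlus2 K f g ∈ (g h x).invtSubmodule := by
  rw [modAnnPlus2_eq_differenceSpan] at hf ⊢
  exact differenceSpan_mem_invtSubmodule_left_of_right (T := (g · ·)) hf

theorem modAnnMinus2_mem_invtSubmodule_of_commutator {φ : Module.End K V} {δ : L → L}
    (hf : ∀ h y, f h (δ y) = f h y * φ - φ * f h y)
    (hg : ∀ h y, g h (δ y) = g h y * φ - φ * g h y) :
    modAnnMinus2 K f g ∈ φ.invtSubmodule := by
  rw [modAnnMinus2_eq_sup_differenceSpan]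
  exact Sublattice.sup_mem (differenceSpan_mem_invtSubmodule_of_commutator hf hf)
    (differenceSpan_mem_invtSubmodule_of_commutator hg hg)

theorem modAnnMinus2_mem_invtSubmodule_of_mul_eq {ψ : Module.End K V} {χ : L → Module.End K V}
    {x : L} (hf : ∀ h y, ψ * f h y = g h x * χ y) (hg : ∀ h y, ψ * g h y = g h x * χ y) :
    modAnnMinus2 K f g ∈ ψ.invtSubmodule := by
  rw [modAnnMinus2_eq_sup_differenceSpan]
  have hle : differenceSpan (f · ·) (f · ·) ⊔ differenceSpan (g · ·) (g · ·) ≤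
      (differenceSpan (g · ·) (g · ·)).comap ψ :=
    sup_le (differenceSpan_self_le_comap hf) (differenceSpan_self_le_comap hg)
  exact hle.trans (Submodule.comap_mono le_sup_right)

theorem stmt_11_general (ang : S → L → L → L)
    (f_ang : ∀ h k x y, f h (ang k x y) = f h x * f k y - f k y * f h x)
    (g_ang : ∀ h k x y, g h (ang k x y) = g h x * f k y - f k y * g h x)
    (g_mul_g : ∀ h k x y, g k x * g h y = g h x * f k y)
    (g_mul_f : ∀ h k x y, g h x * f k y = g k x * f h y) :
    (∀ (s : S) (x : L) (v : V), v ∈ modAnnPlus2 K f g →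
      f s x v ∈ modAnnPlus2 K f g ∧ g s x v ∈ modAnnPlus2 K f g) ∧
    (∀ (s : S) (x : L) (v : V), v ∈ modAnnMinus2 K f g →
      f s x v ∈ modAnnMinus2 K f g ∧ g s x v ∈ modAnnMinus2 K f g) ∧
    modAnnMinus2 K f g ≤ modAnnPlus2 K f g := by
  have plus_f (s : S) (x : L) : modAnnPlus2 K f g ∈ (f s x).invtSubmodule :=
    modAnnPlus2_mem_invtSubmodule_of_commutator (δ := (ang s · x))
      (f_ang · s · x) (g_ang · s · x)
  have plus_g (s : S) (x : L) : modAnnPlus2 K f g ∈ (g s x).invtSubmodule :=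
    modAnnPlus2_mem_invtSubmodule_right_of_left (plus_f s x)
  have minus_f (s : S) (x : L) : modAnnMinus2 K f g ∈ (f s x).invtSubmodule :=
    modAnnMinus2_mem_invtSubmodule_of_commutator (δ := (ang s · x))
      (f_ang · s · x) (g_ang · s · x)
  have minus_g (s : S) (x : L) : modAnnMinus2 K f g ∈ (g s x).invtSubmodule :=
    modAnnMinus2_mem_invtSubmodule_of_mul_eq (χ := (f s ·))
      (g_mul_f s · x ·) (g_mul_g · s x ·)
  exact ⟨fun s x _ hv => ⟨plus_f s x hv, plus_g s x hv⟩,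
    fun s x _ hv => ⟨minus_f s x hv, minus_g s x hv⟩, modAnnMinus2_le_modAnnPlus2 f g⟩

end Annihilators

/-- Both the plus annihilator `V^{ann,+}` and the minus
annihilator `V^{ann,−}` of an ordinary module over a Lie-like algebra^{2-nd}
are ordinary submodules, and `V^{ann,−} ⊆ V^{ann,+}`. -/
theorem stmt_11 (K : Type*) [Field K] (L : Type*) [AddCommGroup L] [Module K L]
    (S : Type*) [Nonempty S]
    (ang : S → L →ₗ[K] L →ₗ[K] L)
    (leib : ∀ (h k : S) (x y z : L),
      ang h (ang k x y) z = ang k x (ang h y z) + ang k (ang h x z) y)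
    (swap : ∀ (h k : S) (x y z : L),
      ang h (ang k x y) z = ang k (ang h x y) z)
    (V : Type*) [AddCommGroup V] [Module K V]
    (f g : S → L →ₗ[K] Module.End K V)
    (hm1 : ∀ (h k : S) (x y : L), f h (ang k x y) = f h x * f k y - f k y * f h x)
    (hm2 : ∀ (h k : S) (x y : L), g h (ang k x y) = g h x * f k y - f k y * g h x)
    (hm3 : ∀ (h k : S) (x y : L), g k x * g h y = g h x * f k y)
    (hm3' : ∀ (h k : S) (x y : L), g h x * f k y = g k x * f h y)
    (hm4 : ∀ (h k : S) (x y : L), f k x * f h y = f h x * f k y)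
    (hm5 : ∀ (h k : S) (x y : L), f k x * g h y = f h x * g k y) :
    (∀ (s : S) (x : L) (v : V), v ∈ modAnnPlus2 K f g →
      f s x v ∈ modAnnPlus2 K f g ∧ g s x v ∈ modAnnPlus2 K f g) ∧
    (∀ (s : S) (x : L) (v : V), v ∈ modAnnMinus2 K f g →
      f s x v ∈ modAnnMinus2 K f g ∧ g s x v ∈ modAnnMinus2 K f g) ∧
    modAnnMinus2 K f g ≤ modAnnPlus2 K f g :=
  stmt_11_general (ang · · ·) hm1 hm2 hm3 hm3'
end

section
/- Let L = L₀ ⊕ L₁ be a Lie-like superalgebra^{1-st} induced by a nonempty set S, and let L^{sann} be its super annihilator, i.e. the subspace spanned by all elements [x,y]_h − [x,y]_k with x ∈ L_α, y ∈ L_β homogeneous (α, β ∈ Z₂) and h, k ∈ S. Then L^{sann} is a graded ideal of L: it is a graded subspace (L^{sann} = (L^{sann} ∩ L₀) ⊕ (L^{sann} ∩ L₁)) and [x, a]_s ∈ L^{sann} for all x ∈ L, a ∈ L^{sann} and s ∈ S. -/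
/-- The super annihilator of a Lie-like superalgebra^{1-st}: the subspace
spanned by all `[x,y]_h − [x,y]_k` with `x, y` homogeneous and `h, k ∈ S`. -/
def superAnn1 (K : Type*) [Field K] {L : Type*} [AddCommGroup L] [Module K L]
    {S : Type*} (Lg : ZMod 2 → Submodule K L)
    (br : S → L →ₗ[K] L →ₗ[K] L) : Submodule K L :=
  Submodule.span K {a : L | ∃ α β : ZMod 2, ∃ h k : S,
    ∃ x ∈ Lg α, ∃ y ∈ Lg β, a = br h x y - br k x y}

/-!
Rearranged, the Jacobi-like identity expands the action of `[w, ·]_s` on every bracket `[·, ·]_h`: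
`[w, [x, y]_h]_s = [[w, x]_s, y]_h - ε [[w, y]_s, x]_h`. The sign `ε` and the inner brackets
`[w, x]_s`, `[w, y]_s` do not depend on `h`, so subtracting the same identity for `k` writes
`[w, [x, y]_h - [x, y]_k]_s` as a combination of two differences of an `h`- and a `k`-bracket.
-/

section HomogeneousSpan

variable {R L ι : Type*} [Semiring R] [AddCommMonoid L] [Module R L]

theorem span_eq_iSup_inf_of_homogeneous {Lg : ι → Submodule R L} {s : Set L}
    (hs : ∀ a ∈ s, ∃ i, a ∈ Lg i) :
    Submodule.span R s = ⨆ i, Submodule.span R s ⊓ Lg i := by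
  refine le_antisymm (Submodule.span_le.mpr fun a ha ↦ ?_) (iSup_le fun _ ↦ inf_le_left)
  obtain ⟨i, hi⟩ := hs a ha
  exact Submodule.mem_iSup_of_mem i ⟨Submodule.subset_span ha, hi⟩

end HomogeneousSpan

section GradedAnn

variable {R L S ι : Type*} [CommRing R] [AddCommGroup L] [Module R L]

/-- The analogue of the super annihilator for a family of brackets on a module over a commutative
ring, with homogeneous components indexed by an arbitrary type in place of `ZMod 2`. Over a field
and for `ZMod 2` it unfolds to the same span as `superAnn1`. -/
def gradedAnn (Lg : ι → Submodule R L) (br : S → L →ₗ[R] L →ₗ[R] L) : Submodule R L :=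
  Submodule.span R {a : L | ∃ α β : ι, ∃ h k : S,
    ∃ x ∈ Lg α, ∃ y ∈ Lg β, a = br h x y - br k x y}

variable {Lg : ι → Submodule R L} {br : S → L →ₗ[R] L →ₗ[R] L}

theorem bracket_sub_bracket_mem_gradedAnn {α β : ι} {x y : L} (h k : S)
    (hx : x ∈ Lg α) (hy : y ∈ Lg β) : br h x y - br k x y ∈ gradedAnn Lg br :=
  Submodule.subset_span ⟨α, β, h, k, x, hx, y, hy, rfl⟩

variable [Add ι]

theorem gradedAnn_eq_iSup_inf
    (hgrade : ∀ (k : S) (α β : ι), ∀ x ∈ Lg α, ∀ y ∈ Lg β, br k x y ∈ Lg (α + β)) :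
    gradedAnn Lg br = ⨆ i, gradedAnn Lg br ⊓ Lg i := by
  refine span_eq_iSup_inf_of_homogeneous ?_
  rintro _ ⟨α, β, h, k, x, hx, y, hy, rfl⟩
  exact ⟨α + β, sub_mem (hgrade h α β x hx y hy) (hgrade k α β x hx y hy)⟩

theorem bracket_mem_gradedAnn_of_homogeneous {ε : ι → ι → R}
    (hgrade : ∀ (k : S) (α β : ι), ∀ x ∈ Lg α, ∀ y ∈ Lg β, br k x y ∈ Lg (α + β))
    (hjac : ∀ (h k : S) (α β γ : ι), ∀ x ∈ Lg α, ∀ y ∈ Lg β, ∀ z ∈ Lg γ,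
      br k (br h x y) z = br h x (br k y z) + ε β γ • br k (br h x z) y)
    {δ : ι} {w a : L} (s : S) (hw : w ∈ Lg δ) (ha : a ∈ gradedAnn Lg br) :
    br s w a ∈ gradedAnn Lg br := by
  suffices gradedAnn Lg br ≤ (gradedAnn Lg br).comap (br s w) from this ha
  refine Submodule.span_le.mpr ?_
  rintro _ ⟨α, β, h, k, x, hx, y, hy, rfl⟩
  have derivation (j : S) :
      br s w (br j x y) = br j (br s w x) y - ε α β • br j (br s w y) x :=
    eq_sub_of_add_eq (hjac s j δ α β w hw x hx y hy).symm
  have expand : br s w (br h x y - br k x y) =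
      (br h (br s w x) y - br k (br s w x) y) -
        ε α β • (br h (br s w y) x - br k (br s w y) x) := by
    rw [map_sub, derivation h, derivation k, smul_sub, sub_sub_sub_comm]
  rw [SetLike.mem_coe, Submodule.mem_comap, expand]
  exact sub_mem
    (bracket_sub_bracket_mem_gradedAnn h k (hgrade s δ α w hw x hx) hy)
    (Submodule.smul_mem _ _
      (bracket_sub_bracket_mem_gradedAnn h k (hgrade s δ β w hw y hy) hx))

theorem bracket_mem_gradedAnn {ε : ι → ι → R} (hspan : ⨆ i, Lg i = ⊤)
    (hgrade : ∀ (k : S) (α β : ι), ∀ x ∈ Lg α, ∀ y ∈ Lg β, br k x y ∈ Lg (α + β))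
    (hjac : ∀ (h k : S) (α β γ : ι), ∀ x ∈ Lg α, ∀ y ∈ Lg β, ∀ z ∈ Lg γ,
      br k (br h x y) z = br h x (br k y z) + ε β γ • br k (br h x z) y)
    (x : L) {a : L} (s : S) (ha : a ∈ gradedAnn Lg br) :
    br s x a ∈ gradedAnn Lg br := by
  have homogeneous_le : ⨆ i, Lg i ≤ (gradedAnn Lg br).comap ((br s).flip a) :=
    iSup_le fun _ _ hw ↦ bracket_mem_gradedAnn_of_homogeneous hgrade hjac s hw ha
  exact homogeneous_le (hspan ▸ Submodule.mem_top)

theorem stmt_12_general {ε : ι → ι → R} (hspan : ⨆ i, Lg i = ⊤)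
    (hgrade : ∀ (k : S) (α β : ι), ∀ x ∈ Lg α, ∀ y ∈ Lg β, br k x y ∈ Lg (α + β))
    (hjac : ∀ (h k : S) (α β γ : ι), ∀ x ∈ Lg α, ∀ y ∈ Lg β, ∀ z ∈ Lg γ,
      br k (br h x y) z = br h x (br k y z) + ε β γ • br k (br h x z) y) :
    (gradedAnn Lg br = ⨆ i, gradedAnn Lg br ⊓ Lg i) ∧
      ∀ (x a : L) (s : S), a ∈ gradedAnn Lg br → br s x a ∈ gradedAnn Lg br :=
  ⟨gradedAnn_eq_iSup_inf hgrade, fun x _ s ↦ bracket_mem_gradedAnn hspan hgrade hjac x s⟩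

end GradedAnn

theorem iSup_zmod_two {M : Type*} [CompleteLattice M] (f : ZMod 2 → M) :
    ⨆ i, f i = f 0 ⊔ f 1 := by
  have eq_zero_or_one : ∀ i : ZMod 2, i = 0 ∨ i = 1 := by decide
  refine le_antisymm (iSup_le fun i ↦ ?_) (sup_le (le_iSup f 0) (le_iSup f 1))
  rcases eq_zero_or_one i with rfl | rfl
  · exact le_sup_left
  · exact le_sup_right

/-- The super annihilator of a Lie-like superalgebra^{1-st} is a
graded ideal: it is a graded subspace and `[x, a]_s ∈ L^{sann}` for all `x ∈ L`,
`a ∈ L^{sann}` and `s ∈ S`. -/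
theorem stmt_12 (K : Type*) [Field K] (L : Type*) [AddCommGroup L] [Module K L]
    (S : Type*) [Nonempty S]
    (Lg : ZMod 2 → Submodule K L) (hdec : IsCompl (Lg 0) (Lg 1))
    (br : S → L →ₗ[K] L →ₗ[K] L)
    (hgrade : ∀ (k : S) (α β : ZMod 2), ∀ x ∈ Lg α, ∀ y ∈ Lg β,
      br k x y ∈ Lg (α + β))
    (hanti : ∀ (k : S) (α β : ZMod 2), ∀ x ∈ Lg α, ∀ y ∈ Lg β,
      br k x y = - ((-1 : K) ^ (α.val * β.val)) • br k y x)
    (hjac : ∀ (h k : S) (α β γ : ZMod 2), ∀ x ∈ Lg α, ∀ y ∈ Lg β, ∀ z ∈ Lg γ,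
      br k (br h x y) z
        = br h x (br k y z) + ((-1 : K) ^ (β.val * γ.val)) • br k (br h x z) y) :
    (superAnn1 K Lg br
      = (superAnn1 K Lg br ⊓ Lg 0) ⊔ (superAnn1 K Lg br ⊓ Lg 1)) ∧
    (∀ (x : L) (a : L) (s : S), a ∈ superAnn1 K Lg br →
      br s x a ∈ superAnn1 K Lg br) := by
  rw [← iSup_zmod_two fun i ↦ superAnn1 K Lg br ⊓ Lg i]
  exact stmt_12_general ((iSup_zmod_two Lg).trans hdec.sup_eq_top) hgrade hjac
end

section
/- Let L = L₀ ⊕ L₁ be a Lie-like superalgebra^{1-st} induced by a nonempty set S with super annihilator L^{sann}. Then on the quotient vector space L/L^{sann}, graded by the images of L₀ and L₁, there is a well-defined bilinear bracket [x + L^{sann}, y + L^{sann}] := [x,y]_k + L^{sann} for any k ∈ S (independent of the choice of k), and with this bracket L/L^{sann} is a Lie superalgebra: the bracket respects the grading, is super anti-symmetric on homogeneous classes ([u,v] = −(−1)^{αβ}[v,u] for u of degree α and v of degree β), and satisfies the super Jacobi identity [[u,v], w] = [u, [v,w]] + (−1)^{βγ}[[u,w], v] for homogeneous u, v, w of degrees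 α, β, γ. -/
/-!
A difference `d = [y, z]_h - [y, z]_k` is again homogeneous, and the Jacobi identities for
`(l, h)` and `(l, k)` share the left-hand bracket `l`; subtracting them writes `[x, d]_l` as a
combination of differences `[·, ·]_h - [·, ·]_k`. So the annihilator is stable under `[x, ·]_l`,
hence under `[·, x]_l` by skew symmetry, and every bracket descends to the quotient, where they all
coincide.
-/

theorem apply_mem_of_iSup_eq_top {R M N ι : Type*} [Semiring R] [AddCommMonoid M] [Module R M]
    [AddCommMonoid N] [Module R N] {V : ι → Submodule R M} (hV : ⨆ i, V i = ⊤)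
    (f : M →ₗ[R] N) {A : Submodule R N} (h : ∀ i, ∀ x ∈ V i, f x ∈ A) (x : M) : f x ∈ A := by
  have hle : ⨆ i, V i ≤ A.comap f := iSup_le h
  exact hle (hV ▸ Submodule.mem_top)

section LieLike

variable {R L ι S : Type*} [CommRing R] [AddCommGroup L] [Module R L]

/-- The annihilator of a family of brackets on a module with homogeneous components `V i`: the
span of all differences `[x, y]_h - [x, y]_k` with `x`, `y` homogeneous. For `ι = ZMod 2` over a
field it is definitionally `superAnn1`. -/
def bracketAnn (V : ι → Submodule R L) (br : S → L →ₗ[R] L →ₗ[R] L) : Submodule R L :=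
  Submodule.span R {a : L | ∃ α β : ι, ∃ h k : S,
    ∃ x ∈ V α, ∃ y ∈ V β, a = br h x y - br k x y}

/-- A family of brackets satisfying the axioms of a Lie-like superalgebra of the first kind, with
an arbitrary type `ι` of degrees and arbitrary scalars `ε α β` in place of `(-1) ^ (α * β)`.
With the super signs and a one-element `S`, these are the identities of a Lie superalgebra. That the
components `V i` span, or are independent, is not part of the predicate. -/
structure IsLieLike [Add ι] (ε : ι → ι → R) (V : ι → Submodule R L)
    (br : S → L →ₗ[R] L →ₗ[R] L) : Prop where
  bracket_mem : ∀ (k : S) (α β : ι), ∀ x ∈ V α, ∀ y ∈ V β, br k x y ∈ V (α + β)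
  skew : ∀ (k : S) (α β : ι), ∀ x ∈ V α, ∀ y ∈ V β, br k x y = -ε α β • br k y x
  jacobi : ∀ (h k : S) (α β γ : ι), ∀ x ∈ V α, ∀ y ∈ V β, ∀ z ∈ V γ,
    br k (br h x y) z = br h x (br k y z) + ε β γ • br k (br h x z) y

theorem bracket_sub_bracket_mem_bracketAnn {V : ι → Submodule R L} (hV : ⨆ i, V i = ⊤)
    (br : S → L →ₗ[R] L →ₗ[R] L) (h k : S) (x y : L) :
    br h x y - br k x y ∈ bracketAnn V br := by
  refine apply_mem_of_iSup_eq_top hV ((br h - br k).flip y) (fun α x hx => ?_) x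
  refine apply_mem_of_iSup_eq_top hV ((br h - br k) x) (fun β y hy => ?_) y
  exact Submodule.subset_span ⟨α, β, h, k, x, hx, y, hy, rfl⟩

namespace IsLieLike

variable [Add ι] {ε : ι → ι → R} {V : ι → Submodule R L} {br : S → L →ₗ[R] L →ₗ[R] L}

theorem bracket_bracket_sub_bracket (H : IsLieLike ε V br) (l h k : S) {α β γ : ι} {x y z : L}
    (hx : x ∈ V α) (hy : y ∈ V β) (hz : z ∈ V γ) :
    br l x (br h y z - br k y z)
      = (br h (br l x y) z - br k (br l x y) z)
        - ε β γ • (br h (br l x z) y - br k (br l x z) y) := by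
  rw [H.jacobi l h α β γ x hx y hy z hz, H.jacobi l k α β γ x hx y hy z hz, map_sub, smul_sub]
  abel

theorem bracket_mem_bracketAnn_right (H : IsLieLike ε V br) (hV : ⨆ i, V i = ⊤) (l : S) (x : L)
    {a : L} (ha : a ∈ bracketAnn V br) : br l x a ∈ bracketAnn V br := by
  refine apply_mem_of_iSup_eq_top hV ((br l).flip a) (fun α x hx => ?_) x
  have hle : bracketAnn V br ≤ (bracketAnn V br).comap (br l x) := by
    refine Submodule.span_le.mpr ?_
    rintro _ ⟨β, γ, h, k, y, hy, z, hz, rfl⟩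
    rw [SetLike.mem_coe, Submodule.mem_comap, H.bracket_bracket_sub_bracket l h k hx hy hz]
    exact sub_mem (bracket_sub_bracket_mem_bracketAnn hV br h k _ _)
      (Submodule.smul_mem _ _ (bracket_sub_bracket_mem_bracketAnn hV br h k _ _))
  exact hle ha

theorem bracket_mem_bracketAnn_left (H : IsLieLike ε V br) (hV : ⨆ i, V i = ⊤) (l : S)
    {a : L} (ha : a ∈ bracketAnn V br) (x : L) : br l a x ∈ bracketAnn V br := by
  refine apply_mem_of_iSup_eq_top hV (br l a) (fun α x hx => ?_) x
  have hle : bracketAnn V br ≤ (bracketAnn V br).comap ((br l).flip x) := by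
    refine Submodule.span_le.mpr ?_
    rintro _ ⟨β, γ, h, k, y, hy, z, hz, rfl⟩
    have hdeg : br h y z - br k y z ∈ V (β + γ) :=
      sub_mem (H.bracket_mem h β γ y hy z hz) (H.bracket_mem k β γ y hy z hz)
    rw [SetLike.mem_coe, Submodule.mem_comap, LinearMap.flip_apply,
      H.skew l (β + γ) α _ hdeg x hx]
    exact Submodule.smul_mem _ _ (H.bracket_mem_bracketAnn_right hV l x
      (bracket_sub_bracket_mem_bracketAnn hV br h k y z))
  exact hle ha

theorem map {M T : Type*} [AddCommGroup M] [Module R M] (H : IsLieLike ε V br) (π : L →ₗ[R] M)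
    (br' : T → M →ₗ[R] M →ₗ[R] M) (σ : T → S)
    (hπ : ∀ t x y, br' t (π x) (π y) = π (br (σ t) x y)) :
    IsLieLike ε (fun i => (V i).map π) br' where
  bracket_mem := by
    rintro t α β _ ⟨x, hx, rfl⟩ _ ⟨y, hy, rfl⟩
    exact ⟨br (σ t) x y, H.bracket_mem (σ t) α β x hx y hy, (hπ t x y).symm⟩
  skew := by
    rintro t α β _ ⟨x, hx, rfl⟩ _ ⟨y, hy, rfl⟩
    rw [hπ, hπ, H.skew (σ t) α β x hx y hy, map_smul]
  jacobi := by
    rintro s t α β γ _ ⟨x, hx, rfl⟩ _ ⟨y, hy, rfl⟩ _ ⟨z, hz, rfl⟩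
    simp only [hπ]
    rw [H.jacobi (σ s) (σ t) α β γ x hx y hy z hz, map_add, map_smul]

end IsLieLike

theorem stmt_13_general [Nonempty S] [Add ι] {ε : ι → ι → R} {V : ι → Submodule R L}
    {br : S → L →ₗ[R] L →ₗ[R] L} (hV : ⨆ i, V i = ⊤) (H : IsLieLike ε V br) :
    ∃ qbr : (L ⧸ bracketAnn V br) →ₗ[R] (L ⧸ bracketAnn V br) →ₗ[R] (L ⧸ bracketAnn V br),
      (∀ (k : S) (x y : L),
        qbr (Submodule.Quotient.mk x) (Submodule.Quotient.mk y)
          = Submodule.Quotient.mk (br k x y)) ∧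
      IsLieLike ε (fun i => (V i).map (bracketAnn V br).mkQ) (fun _ : Unit => qbr) := by
  obtain ⟨k₀⟩ := ‹Nonempty S›
  let A := bracketAnn V br
  let qbr := ((br k₀).compr₂ A.mkQ).liftQ₂ A A
    (fun _ ha => LinearMap.ext fun x =>
      (Submodule.Quotient.mk_eq_zero A).mpr (H.bracket_mem_bracketAnn_left hV k₀ ha x))
    (fun _ ha => LinearMap.ext fun x =>
      (Submodule.Quotient.mk_eq_zero A).mpr (H.bracket_mem_bracketAnn_right hV k₀ x ha))
  have hqbr (k : S) (x y : L) : qbr (Submodule.Quotient.mk x) (Submodule.Quotient.mk y)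
      = Submodule.Quotient.mk (br k x y) :=
    (Submodule.Quotient.eq A).mpr (bracket_sub_bracket_mem_bracketAnn hV br k₀ k x y)
  exact ⟨qbr, hqbr, H.map A.mkQ _ (fun _ => k₀) fun _ => hqbr k₀⟩

end LieLike

/-- On `L / L^{sann}`, graded by the images of `L₀` and `L₁`,
there is a well-defined bilinear bracket `[x̄, ȳ] = [x,y]_k + L^{sann}`
(independent of `k ∈ S`) making the quotient a Lie superalgebra: the bracket
respects the grading, is super anti-symmetric on homogeneous classes, and
satisfies the super Jacobi identity on homogeneous classes. -/
theorem stmt_13 (K : Type*) [Field K] (L : Type*) [AddCommGroup L] [Module K L]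
    (S : Type*) [Nonempty S]
    (Lg : ZMod 2 → Submodule K L) (hdec : IsCompl (Lg 0) (Lg 1))
    (br : S → L →ₗ[K] L →ₗ[K] L)
    (hgrade : ∀ (k : S) (α β : ZMod 2), ∀ x ∈ Lg α, ∀ y ∈ Lg β,
      br k x y ∈ Lg (α + β))
    (hanti : ∀ (k : S) (α β : ZMod 2), ∀ x ∈ Lg α, ∀ y ∈ Lg β,
      br k x y = - ((-1 : K) ^ (α.val * β.val)) • br k y x)
    (hjac : ∀ (h k : S) (α β γ : ZMod 2), ∀ x ∈ Lg α, ∀ y ∈ Lg β, ∀ z ∈ Lg γ,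
      br k (br h x y) z
        = br h x (br k y z) + ((-1 : K) ^ (β.val * γ.val)) • br k (br h x z) y) :
    ∃ qbr : (L ⧸ superAnn1 K Lg br) →ₗ[K] (L ⧸ superAnn1 K Lg br) →ₗ[K]
        (L ⧸ superAnn1 K Lg br),
      (∀ (k : S) (x y : L),
        qbr (Submodule.Quotient.mk x) (Submodule.Quotient.mk y)
          = Submodule.Quotient.mk (br k x y)) ∧
      (∀ (α β : ZMod 2),
        ∀ u ∈ (Lg α).map (superAnn1 K Lg br).mkQ,
        ∀ v ∈ (Lg β).map (superAnn1 K Lg br).mkQ,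
          qbr u v ∈ (Lg (α + β)).map (superAnn1 K Lg br).mkQ) ∧
      (∀ (α β : ZMod 2),
        ∀ u ∈ (Lg α).map (superAnn1 K Lg br).mkQ,
        ∀ v ∈ (Lg β).map (superAnn1 K Lg br).mkQ,
          qbr u v = - ((-1 : K) ^ (α.val * β.val)) • qbr v u) ∧
      (∀ (α β γ : ZMod 2),
        ∀ u ∈ (Lg α).map (superAnn1 K Lg br).mkQ,
        ∀ v ∈ (Lg β).map (superAnn1 K Lg br).mkQ,
        ∀ w ∈ (Lg γ).map (superAnn1 K Lg br).mkQ,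
          qbr (qbr u v) w
            = qbr u (qbr v w) + ((-1 : K) ^ (β.val * γ.val)) • qbr (qbr u w) v) := by
  have htop : ⨆ i, Lg i = ⊤ :=
    top_le_iff.mp (hdec.sup_eq_top ▸ sup_le (le_iSup Lg 0) (le_iSup Lg 1))
  obtain ⟨qbr, hqbr, H⟩ := stmt_13_general htop
    (ε := fun α β => (-1 : K) ^ (α.val * β.val)) ⟨hgrade, hanti, hjac⟩
  exact ⟨qbr, hqbr, H.bracket_mem (), H.skew (), H.jacobi () ()⟩
end

section
/- Let L = L₀ ⊕ L₁ be a Lie-like superalgebra^{1-st} induced by a nonempty set S. Then the even part L₀, with the restricted brackets [·,·]_k (k ∈ S), is a Lie-like algebra^{1-st} induced by S (the brackets map L₀ × L₀ into L₀, are anti-symmetric, and satisfy the Jacobi-like identity^{1-st}: [[x,y]_h, z]_k + [[y,z]_k, x]_h + [[z,x]_h, y]_k = 0 for x, y, z ∈ L₀ and h, k ∈ S), and the odd part L₁ is an ordinary module over L₀ via the maps f_k(x)(v) := [x, v]_k for x ∈ L₀, v ∈ L₁: f_h([x,y]_k) = f_h(x)∘f_k(y) − f_h(y)∘f_k(x)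 and f_k(x)∘f_h(y) = f_h(x)∘f_k(y) for all x, y ∈ L₀ and h, k ∈ S. -/
/-!
Let `x`, `y` be even and `v` homogeneous. Every Koszul sign that arises in moving an even element
past a homogeneous one is `1`, so the super Jacobi-like identities for `(x, y, v)` and `(v, x, y)`
expand the same element `[[x, y]_k, v]_h` in two ways:
`[x, [y, v]_h]_k - [y, [x, v]_k]_h = [x, [y, v]_h]_k - [y, [x, v]_h]_k`.
Comparing them, the indices of two successive actions by even elements may be exchanged. This is
one module identity, and with it either expansion becomes the other one. Taking `v` even in the
first expansion gives the Jacobi-like identity.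
-/

section

variable {K L S : Type*} [CommRing K] [AddCommGroup L] [Module K L]

/-- Lie-like superalgebra^{1-st} structure induced by `S`, with homogeneous parts `Lg 0` and `Lg 1`
and brackets `[x, y]_k = br k x y`. The decomposition `L = Lg 0 ⊕ Lg 1` is not part of this
predicate. -/
structure IsLieLikeSuperalgebra (Lg : ZMod 2 → Submodule K L) (br : S → L →ₗ[K] L →ₗ[K] L) :
    Prop where
  bracket_mem : ∀ (k : S) (α β : ZMod 2), ∀ x ∈ Lg α, ∀ y ∈ Lg β, br k x y ∈ Lg (α + β)
  skew : ∀ (k : S) (α β : ZMod 2), ∀ x ∈ Lg α, ∀ y ∈ Lg β,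
    br k x y = - ((-1 : K) ^ (α.val * β.val)) • br k y x
  jacobi : ∀ (h k : S) (α β γ : ZMod 2), ∀ x ∈ Lg α, ∀ y ∈ Lg β, ∀ z ∈ Lg γ,
    br k (br h x y) z
      = br h x (br k y z) + ((-1 : K) ^ (β.val * γ.val)) • br k (br h x z) y

/-- The subspace `A`, with the restrictions of the brackets `br k`, is a Lie-like algebra^{1-st}
induced by `S`. The brackets stay defined on `L`; their restriction to `A` is expressed by
membership. -/
structure IsLieLikeSubalgebra (A : Submodule K L) (br : S → L →ₗ[K] L →ₗ[K] L) : Prop where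
  bracket_mem : ∀ k, ∀ x ∈ A, ∀ y ∈ A, br k x y ∈ A
  skew : ∀ k, ∀ x ∈ A, ∀ y ∈ A, br k x y = - br k y x
  jacobi : ∀ h k, ∀ x ∈ A, ∀ y ∈ A, ∀ z ∈ A,
    br k (br h x y) z + br h (br k y z) x + br k (br h z x) y = 0

/-- The subspace `V` is an ordinary module over the subspace `A` via `f_k(x)(v) = [x, v]_k`, for
`x ∈ A` and `v ∈ V`. -/
structure IsOrdinarySubmodule (A V : Submodule K L) (br : S → L →ₗ[K] L →ₗ[K] L) : Prop where
  act_mem : ∀ k, ∀ x ∈ A, ∀ v ∈ V, br k x v ∈ V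
  bracket_act : ∀ h k, ∀ x ∈ A, ∀ y ∈ A, ∀ v ∈ V,
    br h (br k x y) v = br h x (br k y v) - br h y (br k x v)
  act_exchange : ∀ h k, ∀ x ∈ A, ∀ y ∈ A, ∀ v ∈ V, br k x (br h y v) = br h x (br k y v)

namespace IsLieLikeSuperalgebra

variable {Lg : ZMod 2 → Submodule K L} {br : S → L →ₗ[K] L →ₗ[K] L} {α γ : ZMod 2} {x y v : L}

lemma even_bracket_mem (hL : IsLieLikeSuperalgebra Lg br) (k : S) (hx : x ∈ Lg 0)
    (hv : v ∈ Lg γ) : br k x v ∈ Lg γ := by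
  simpa only [zero_add] using hL.bracket_mem k 0 γ x hx v hv

lemma skew_even_right (hL : IsLieLikeSuperalgebra Lg br) (k : S) (hv : v ∈ Lg γ)
    (hx : x ∈ Lg 0) : br k v x = - br k x v := by
  simpa using hL.skew k γ 0 v hv x hx

lemma bracket_bracket_even_middle (hL : IsLieLikeSuperalgebra Lg br) (h k : S) (hx : x ∈ Lg α)
    (hy : y ∈ Lg 0) (hv : v ∈ Lg γ) :
    br k (br h x y) v = br h x (br k y v) - br k y (br h x v) := by
  have jacobi_xyv : br k (br h x y) v = br h x (br k y v) + br k (br h x v) y := by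
    simpa using hL.jacobi h k α 0 γ x hx y hy v hv
  rw [jacobi_xyv, hL.skew_even_right k (hL.bracket_mem h α γ x hx v hv) hy, sub_eq_add_neg]

lemma even_bracket_bracket (hL : IsLieLikeSuperalgebra Lg br) (h k : S) (hx : x ∈ Lg 0)
    (hy : y ∈ Lg 0) (hv : v ∈ Lg γ) :
    br h (br k x y) v = br k x (br h y v) - br k y (br h x v) := by
  have jacobi_vxy : br k (br h v x) y = br h v (br k x y) + br k (br h v y) x := by
    simpa using hL.jacobi h k γ 0 0 v hv x hx y hy
  have swap_outer : br h v (br k x y) = - br h (br k x y) v :=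
    hL.skew_even_right h hv (hL.even_bracket_mem k hx hy)
  have swap_both {a b : L} (ha : a ∈ Lg 0) (hb : b ∈ Lg 0) :
      br k (br h v a) b = br k b (br h a v) := by
    rw [hL.skew_even_right h hv ha, map_neg, LinearMap.neg_apply,
      hL.skew_even_right k (hL.even_bracket_mem h ha hv) hb, neg_neg]
  rw [swap_outer, swap_both hx hy, swap_both hy hx] at jacobi_vxy
  rw [jacobi_vxy]
  abel

lemma even_act_exchange (hL : IsLieLikeSuperalgebra Lg br) (h k : S) (hx : x ∈ Lg 0)
    (hy : y ∈ Lg 0) (hv : v ∈ Lg γ) : br k x (br h y v) = br h x (br k y v) := by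
  have two_expansions :
      br k y (br h x v) - br k x (br h y v) = br k y (br h x v) - br h x (br k y v) :=
    (hL.even_bracket_bracket h k hy hx hv).symm.trans
      (hL.bracket_bracket_even_middle k h hy hx hv)
  exact sub_right_injective two_expansions

theorem isLieLikeSubalgebra_even (hL : IsLieLikeSuperalgebra Lg br) :
    IsLieLikeSubalgebra (Lg 0) br where
  bracket_mem k _ hx _ hy := hL.even_bracket_mem k hx hy
  skew k _ hx _ hy := hL.skew_even_right k hx hy
  jacobi h k x hx y hy z hz := by
    rw [hL.bracket_bracket_even_middle h k hx hy hz,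
      hL.skew_even_right h (hL.even_bracket_mem k hy hz) hx,
      hL.skew_even_right k (hL.even_bracket_mem h hz hx) hy,
      hL.skew_even_right h hz hx, map_neg]
    abel

theorem isOrdinarySubmodule_even (hL : IsLieLikeSuperalgebra Lg br) (γ : ZMod 2) :
    IsOrdinarySubmodule (Lg 0) (Lg γ) br where
  act_mem k _ hx _ hv := hL.even_bracket_mem k hx hv
  bracket_act h k x hx y hy v hv := by
    rw [hL.even_bracket_bracket h k hx hy hv, hL.even_act_exchange h k hx hy hv,
      hL.even_act_exchange h k hy hx hv]
  act_exchange h k _ hx _ hy _ hv := hL.even_act_exchange h k hx hy hv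

end IsLieLikeSuperalgebra

theorem stmt_14_general {Lg : ZMod 2 → Submodule K L} {br : S → L →ₗ[K] L →ₗ[K] L}
    (hL : IsLieLikeSuperalgebra Lg br) :
    IsLieLikeSubalgebra (Lg 0) br ∧ ∀ γ, IsOrdinarySubmodule (Lg 0) (Lg γ) br :=
  ⟨hL.isLieLikeSubalgebra_even, hL.isOrdinarySubmodule_even⟩

end

/-- For a Lie-like superalgebra^{1-st} `L = L₀ ⊕ L₁` induced by
`S`, the even part `L₀` with the restricted brackets is a Lie-like
algebra^{1-st} induced by `S`, and the odd part `L₁` is an ordinary module over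
`L₀` via `f_k(x)(v) := [x, v]_k`. -/
theorem stmt_14 (K : Type*) [Field K] (L : Type*) [AddCommGroup L] [Module K L]
    (S : Type*) [Nonempty S]
    (Lg : ZMod 2 → Submodule K L) (hdec : IsCompl (Lg 0) (Lg 1))
    (br : S → L →ₗ[K] L →ₗ[K] L)
    (hgrade : ∀ (k : S) (α β : ZMod 2), ∀ x ∈ Lg α, ∀ y ∈ Lg β,
      br k x y ∈ Lg (α + β))
    (hanti : ∀ (k : S) (α β : ZMod 2), ∀ x ∈ Lg α, ∀ y ∈ Lg β,
      br k x y = - ((-1 : K) ^ (α.val * β.val)) • br k y x)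
    (hjac : ∀ (h k : S) (α β γ : ZMod 2), ∀ x ∈ Lg α, ∀ y ∈ Lg β, ∀ z ∈ Lg γ,
      br k (br h x y) z
        = br h x (br k y z) + ((-1 : K) ^ (β.val * γ.val)) • br k (br h x z) y) :
    -- `L₀` is closed under every bracket
    (∀ (k : S), ∀ x ∈ Lg 0, ∀ y ∈ Lg 0, br k x y ∈ Lg 0) ∧
    -- each bracket is anti-symmetric on `L₀`
    (∀ (k : S), ∀ x ∈ Lg 0, ∀ y ∈ Lg 0, br k x y = - br k y x) ∧
    -- the Jacobi-like identity^{1-st} holds on `L₀`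
    (∀ (h k : S), ∀ x ∈ Lg 0, ∀ y ∈ Lg 0, ∀ z ∈ Lg 0,
      br k (br h x y) z + br h (br k y z) x + br k (br h z x) y = 0) ∧
    -- `L₁` is stable under `f_k(x) = [x, ·]_k` for `x ∈ L₀`
    (∀ (k : S), ∀ x ∈ Lg 0, ∀ v ∈ Lg 1, br k x v ∈ Lg 1) ∧
    -- first ordinary-module identity on `L₁`
    (∀ (h k : S), ∀ x ∈ Lg 0, ∀ y ∈ Lg 0, ∀ v ∈ Lg 1,
      br h (br k x y) v = br h x (br k y v) - br h y (br k x v)) ∧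
    -- second ordinary-module identity on `L₁`
    (∀ (h k : S), ∀ x ∈ Lg 0, ∀ y ∈ Lg 0, ∀ v ∈ Lg 1,
      br k x (br h y v) = br h x (br k y v)) := by
  obtain ⟨hA, hV⟩ := stmt_14_general ⟨hgrade, hanti, hjac⟩
  exact ⟨hA.bracket_mem, hA.skew, hA.jacobi, (hV 1).act_mem, (hV 1).bracket_act,
    (hV 1).act_exchange⟩
end

section
/- Let L = L₀ ⊕ L₁ be a Lie-like superalgebra^{1-st} induced by a nonempty set S. For k ∈ S define ad_k : L → End(L) by ad_k(x)(a) := [x, a]_k. Then for all homogeneous x ∈ L_α, y ∈ L_β (α, β ∈ Z₂) and all h, k ∈ S: ad_h([x,y]_k) = ad_h(x)∘ad_k(y) − (−1)^{αβ} ad_h(y)∘ad_k(x), and ad_k(x)∘ad_h(y) = ad_h(x)∘ad_k(y); that is, (L, {ad_k}_{k∈S}) is an ordinary module over L. -/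
/-!
Up to the factors `ε`, skew-symmetry turns the Jacobi-like identity into the cyclic identity
`[x, [y, z]_k]_h + [y, [z, x]_h]_k + [z, [x, y]_h]_k = 0`, in which only the first term has `h`
outside. Its instance for `(k, h; y, z, x)` contains the first two terms as well, so subtracting
the two gives `[z, [x, y]_h]_k = [z, [x, y]_k]_h`. This exchange of indices is the second module
identity, and it turns the Jacobi-like identity into the first one.
-/

/-- A commutation factor on `G` with values in `R`: the data replacing the sign `(-1) ^ (α * β)`
when the grading group `ZMod 2` of superalgebras is replaced by `G`. It is multiplicative in the
left argument too, by `IsCommutationFactor.add_left`. -/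
structure IsCommutationFactor {G R : Type*} [Add G] [CommMonoid R] (ε : G → G → R) : Prop where
  add_right : ∀ α β γ, ε α (β + γ) = ε α β * ε α γ
  mul_swap : ∀ α β, ε α β * ε β α = 1

/-- A `G`-graded family of brackets `br k x y = [x, y]_k` on `L` which is skew-symmetric and
satisfies the Jacobi-like identity of the first kind up to the factors `ε`. Lie-like
superalgebras are the case `G = ZMod 2`, `ε α β = (-1) ^ (α * β)`. That the pieces `Lg α`
decompose `L` is not part of the definition. -/
structure IsLieLikeColorAlgebra {G R L S : Type*} [Add G] [CommRing R] [AddCommGroup L]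
    [Module R L] (ε : G → G → R) (Lg : G → Submodule R L) (br : S → L →ₗ[R] L →ₗ[R] L) :
    Prop where
  bracket_mem : ∀ (k : S) (α β : G), ∀ x ∈ Lg α, ∀ y ∈ Lg β, br k x y ∈ Lg (α + β)
  skew : ∀ (k : S) (α β : G), ∀ x ∈ Lg α, ∀ y ∈ Lg β, br k x y = -ε α β • br k y x
  jacobi : ∀ (h k : S) (α β γ : G), ∀ x ∈ Lg α, ∀ y ∈ Lg β, ∀ z ∈ Lg γ,
    br k (br h x y) z = br h x (br k y z) + ε β γ • br k (br h x z) y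

namespace IsCommutationFactor

theorem add_left {G R : Type*} [Add G] [CommMonoid R] {ε : G → G → R}
    (hε : IsCommutationFactor ε) (α β γ : G) : ε (α + β) γ = ε α γ * ε β γ := by
  refine left_inv_eq_right_inv (hε.mul_swap _ _) ?_
  rw [hε.add_right, mul_mul_mul_comm, hε.mul_swap, hε.mul_swap, one_mul]

theorem neg_one_pow_val (R : Type*) [CommRing R] :
    IsCommutationFactor fun α β : ZMod 2 ↦ (-1 : R) ^ (α.val * β.val) where
  add_right α β γ := by
    rw [← pow_add, ← mul_add, ZMod.val_add, pow_mul, pow_mul]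
    rcases neg_one_pow_eq_or R α.val with hα | hα <;> rw [hα]
    · simp only [one_pow]
    · exact (neg_one_pow_eq_pow_mod_two _).symm
  mul_swap α β := by
    rw [mul_comm β.val, ← pow_add]
    exact (Even.add_self _).neg_one_pow

end IsCommutationFactor

theorem linearMap_ext_of_iSup_eq_top {ι R M N : Type*} [Semiring R] [AddCommMonoid M]
    [AddCommMonoid N] [Module R M] [Module R N] {p : ι → Submodule R M} (hp : ⨆ i, p i = ⊤)
    {f g : M →ₗ[R] N} (hfg : ∀ i, ∀ z ∈ p i, f z = g z) : f = g :=
  LinearMap.eqLocus_eq_top.1 (top_le_iff.1 (hp ▸ iSup_le hfg))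

namespace IsLieLikeColorAlgebra

variable {G R L S : Type*} [Add G] [CommRing R] [AddCommGroup L] [Module R L]
  {ε : G → G → R} {Lg : G → Submodule R L} {br : S → L →ₗ[R] L →ₗ[R] L} {α β γ : G} {x y z : L}

theorem bracket_bracket_eq_sub (hε : IsCommutationFactor ε) (hL : IsLieLikeColorAlgebra ε Lg br)
    (h k : S) (hx : x ∈ Lg α) (hy : y ∈ Lg β) (hz : z ∈ Lg γ) :
    br k (br h x y) z = br h x (br k y z) - ε α β • br k y (br h x z) := by
  have hsign : ε β γ * ε (α + γ) β = ε α β := by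
    rw [hε.add_left, mul_left_comm, hε.mul_swap, mul_one]
  rw [hL.jacobi h k α β γ x hx y hy z hz,
    hL.skew k _ _ _ (hL.bracket_mem h α γ x hx z hz) y hy, neg_smul, smul_neg, smul_smul, hsign,
    ← sub_eq_add_neg]

theorem jacobi_cyclic (hε : IsCommutationFactor ε) (hL : IsLieLikeColorAlgebra ε Lg br)
    (h k : S) (hx : x ∈ Lg α) (hy : y ∈ Lg β) (hz : z ∈ Lg γ) :
    ε γ α • br h x (br k y z) + ε α β • br k y (br h z x) + ε β γ • br k z (br h x y) = 0 := by
  have hxy : br k (br h x y) z = -(ε α γ * ε β γ) • br k z (br h x y) := by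
    rw [← hε.add_left]
    exact hL.skew k _ _ _ (hL.bracket_mem h α β x hx y hy) z hz
  have hxz : br k y (br h x z) = -ε α γ • br k y (br h z x) := by
    rw [hL.skew h α γ x hx z hz, map_smul]
  have hjac := hL.bracket_bracket_eq_sub hε h k hx hy hz
  rw [hxy, hxz] at hjac
  linear_combination (norm := module) (-ε γ α) • hjac -
    hε.mul_swap α γ • (ε α β • br k y (br h z x) + ε β γ • br k z (br h x y))

theorem bracket_bracket_exchange (hε : IsCommutationFactor ε)
    (hL : IsLieLikeColorAlgebra ε Lg br) (h k : S)
    (hx : x ∈ Lg α) (hy : y ∈ Lg β) (hz : z ∈ Lg γ) :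
    br k x (br h y z) = br h x (br k y z) := by
  have hyzx := hL.jacobi_cyclic hε h k hy hz hx
  have hzxy := hL.jacobi_cyclic hε k h hz hx hy
  have hsmul : ε γ α • br k x (br h y z) = ε γ α • br h x (br k y z) := by
    linear_combination (norm := module) hyzx - hzxy
  have hunit : IsUnit (ε γ α) := .of_mul_eq_one _ (hε.mul_swap γ α)
  exact hunit.smul_left_cancel.1 hsmul

end IsLieLikeColorAlgebra

theorem stmt_15_general {G R L S : Type*} [Add G] [CommRing R] [AddCommGroup L] [Module R L]
    {ε : G → G → R} {Lg : G → Submodule R L} {br : S → L →ₗ[R] L →ₗ[R] L}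
    (hε : IsCommutationFactor ε) (hL : IsLieLikeColorAlgebra ε Lg br) (hspan : ⨆ α, Lg α = ⊤) :
    ∀ (h k : S) (α β : G), ∀ x ∈ Lg α, ∀ y ∈ Lg β,
      (br h (br k x y) = br h x ∘ₗ br k y - ε α β • (br h y ∘ₗ br k x)) ∧
      (br k x ∘ₗ br h y = br h x ∘ₗ br k y) := by
  intro h k α β x hx y hy
  have exchange : br k x ∘ₗ br h y = br h x ∘ₗ br k y :=
    linearMap_ext_of_iSup_eq_top hspan fun _ _ hz ↦ hL.bracket_bracket_exchange hε h k hx hy hz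
  refine ⟨?_, exchange⟩
  rw [← exchange]
  exact linearMap_ext_of_iSup_eq_top hspan fun _ _ hz ↦
    hL.bracket_bracket_eq_sub hε k h hx hy hz

/-- For a Lie-like superalgebra^{1-st} `L` induced by `S`, the
adjoint maps `ad_k(x) = [x, ·]_k` make `(L, {ad_k})` an ordinary module over
`L`: for homogeneous `x ∈ L_α`, `y ∈ L_β` and `h, k ∈ S`,
`ad_h([x,y]_k) = ad_h(x)∘ad_k(y) − (−1)^{αβ} ad_h(y)∘ad_k(x)` and
`ad_k(x)∘ad_h(y) = ad_h(x)∘ad_k(y)`. -/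
theorem stmt_15 (K : Type*) [Field K] (L : Type*) [AddCommGroup L] [Module K L]
    (S : Type*) [Nonempty S]
    (Lg : ZMod 2 → Submodule K L) (hdec : IsCompl (Lg 0) (Lg 1))
    (br : S → L →ₗ[K] L →ₗ[K] L)
    (hgrade : ∀ (k : S) (α β : ZMod 2), ∀ x ∈ Lg α, ∀ y ∈ Lg β,
      br k x y ∈ Lg (α + β))
    (hanti : ∀ (k : S) (α β : ZMod 2), ∀ x ∈ Lg α, ∀ y ∈ Lg β,
      br k x y = - ((-1 : K) ^ (α.val * β.val)) • br k y x)
    (hjac : ∀ (h k : S) (α β γ : ZMod 2), ∀ x ∈ Lg α, ∀ y ∈ Lg β, ∀ z ∈ Lg γ,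
      br k (br h x y) z
        = br h x (br k y z) + ((-1 : K) ^ (β.val * γ.val)) • br k (br h x z) y) :
    ∀ (h k : S) (α β : ZMod 2), ∀ x ∈ Lg α, ∀ y ∈ Lg β,
      (br h (br k x y)
        = br h x ∘ₗ br k y - ((-1 : K) ^ (α.val * β.val)) • (br h y ∘ₗ br k x)) ∧
      (br k x ∘ₗ br h y = br h x ∘ₗ br k y) := by
  have hspan : ⨆ α, Lg α = ⊤ :=
    top_le_iff.1 (hdec.codisjoint.top_le.trans (sup_le (le_iSup Lg 0) (le_iSup Lg 1)))
  exact stmt_15_general (.neg_one_pow_val K) ⟨hgrade, hanti, hjac⟩ hspan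
end

section
/- Let L = L₀ ⊕ L₁ be a Lie-like superalgebra^{1-st} induced by a nonempty set S and let (V = V₀ ⊕ V₁, {f_k}_{k∈S}) be an ordinary module over L. Then the super annihilator V^{sann}, i.e. the subspace of V spanned by all vectors (f_h(x) − f_k(x))(v) with x ∈ L homogeneous, v ∈ V homogeneous and h, k ∈ S, is an ordinary submodule of V: f_s(x)(V^{sann}) ⊆ V^{sann} for all x ∈ L and s ∈ S. -/
/-- The super annihilator of an ordinary module `(V = V₀ ⊕ V₁, {f_k})` over a
Lie-like superalgebra^{1-st}: the subspace spanned by all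
`(f_h(x) − f_k(x))(v)` with `x ∈ L`, `v ∈ V` homogeneous and `h, k ∈ S`. -/
def superModAnn1 (K : Type*) [Field K] {L : Type*} [AddCommGroup L] [Module K L]
    {V : Type*} [AddCommGroup V] [Module K V]
    {S : Type*} (Lg : ZMod 2 → Submodule K L) (Vg : ZMod 2 → Submodule K V)
    (f : S → L →ₗ[K] Module.End K V) : Submodule K V :=
  Submodule.span K {w : V | ∃ α β : ZMod 2, ∃ h k : S,
    ∃ x ∈ Lg α, ∃ v ∈ Vg β, w = (f h x - f k x) v}

/-!
The exchange rule `f_k(x) ∘ f_h(y) = f_h(x) ∘ f_k(y)` moves the difference from the inner factor to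
the outer one: `f_s(x) ((f_h(y) − f_k(y)) v) = (f_h(x) − f_k(x)) (f_s(y) v)`. The right-hand side is
a difference applied to a vector that need not be homogeneous. Homogeneous elements span `L` and
`V`, so by bilinearity it lies in the super annihilator nevertheless.
-/

theorem iSup_eq_top_of_codisjoint {α ι : Type*} [CompleteLattice α] {p : ι → α} {i j : ι}
    (h : Codisjoint (p i) (p j)) : ⨆ i, p i = ⊤ :=
  codisjoint_self.mp (h.mono (le_iSup p i) (le_iSup p j))

section GradedModAnn

variable {R L V S ι κ : Type*} [CommSemiring R] [AddCommMonoid L] [Module R L]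
  [AddCommGroup V] [Module R V]

/-- The annihilator `V^{sann}` of a family of actions `f_k` of `L` on `V`, for arbitrary families of
homogeneous components `Lg` and `Vg`: the subspace spanned by the vectors `(f_h(x) − f_k(x))(v)`
with `x` and `v` homogeneous. For components indexed by `ZMod 2` over a field it unfolds to
`superModAnn1`. -/
def gradedModAnn (Lg : ι → Submodule R L) (Vg : κ → Submodule R V)
    (f : S → L →ₗ[R] Module.End R V) : Submodule R V :=
  Submodule.span R {w : V | ∃ (i : ι) (j : κ) (h k : S),
    ∃ x ∈ Lg i, ∃ v ∈ Vg j, w = (f h x - f k x) v}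

variable {Lg : ι → Submodule R L} {Vg : κ → Submodule R V} {f : S → L →ₗ[R] Module.End R V}

theorem sub_apply_mem_gradedModAnn (hL : ⨆ i, Lg i = ⊤) (hV : ⨆ j, Vg j = ⊤)
    (h k : S) (x : L) (v : V) : (f h x - f k x) v ∈ gradedModAnn Lg Vg f := by
  have map₂_le : Submodule.map₂ (f h - f k) (⨆ i, Lg i) (⨆ j, Vg j) ≤ gradedModAnn Lg Vg f := by
    simp only [Submodule.map₂_iSup_left, Submodule.map₂_iSup_right, iSup_le_iff, Submodule.map₂_le]
    exact fun j i x hx v hv => Submodule.subset_span ⟨_, _, h, k, x, hx, v, hv, rfl⟩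
  exact map₂_le (Submodule.apply_mem_map₂ _ (hL ▸ Submodule.mem_top) (hV ▸ Submodule.mem_top))

theorem apply_sub_apply_eq_sub_apply_apply {x y : L}
    (hswap : ∀ h k : S, f k x * f h y = f h x * f k y) (s h k : S) (v : V) :
    f s x ((f h y - f k y) v) = (f h x - f k x) (f s y v) := by
  have swap_apply (t : S) : f s x (f t y v) = f t x (f s y v) :=
    LinearMap.congr_fun (hswap t s) v
  simp only [LinearMap.sub_apply, map_sub, swap_apply]

theorem stmt_16_general (hL : ⨆ i, Lg i = ⊤) (hV : ⨆ j, Vg j = ⊤)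
    (hswap : ∀ (h k : S) (i j : ι), ∀ x ∈ Lg i, ∀ y ∈ Lg j, f k x * f h y = f h x * f k y)
    (s : S) (x : L) (v : V) (hv : v ∈ gradedModAnn Lg Vg f) :
    f s x v ∈ gradedModAnn Lg Vg f := by
  let A := gradedModAnn Lg Vg f
  have homogeneous_le (i : ι) : Lg i ≤ (A.compatibleMaps A).comap (f s) := by
    refine fun x hx => Submodule.span_le.mpr ?_
    rintro _ ⟨j, _, h, k, y, hy, u, -, rfl⟩
    rw [SetLike.mem_coe, Submodule.mem_comap,
      apply_sub_apply_eq_sub_apply_apply (fun h k => hswap h k i j x hx y hy)]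
    exact sub_apply_mem_gradedModAnn hL hV h k x (f s y u)
  exact iSup_le homogeneous_le (hL ▸ Submodule.mem_top : x ∈ ⨆ i, Lg i) hv

end GradedModAnn

/-- The super annihilator of an ordinary module over a Lie-like
superalgebra^{1-st} is an ordinary submodule:
`f_s(x)(V^{sann}) ⊆ V^{sann}` for all `x ∈ L` and `s ∈ S`. -/
theorem stmt_16 (K : Type*) [Field K] (L : Type*) [AddCommGroup L] [Module K L]
    (S : Type*) [Nonempty S]
    (Lg : ZMod 2 → Submodule K L) (hdec : IsCompl (Lg 0) (Lg 1))
    (br : S → L →ₗ[K] L →ₗ[K] L)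
    (hgrade : ∀ (k : S) (α β : ZMod 2), ∀ x ∈ Lg α, ∀ y ∈ Lg β,
      br k x y ∈ Lg (α + β))
    (hanti : ∀ (k : S) (α β : ZMod 2), ∀ x ∈ Lg α, ∀ y ∈ Lg β,
      br k x y = - ((-1 : K) ^ (α.val * β.val)) • br k y x)
    (hjac : ∀ (h k : S) (α β γ : ZMod 2), ∀ x ∈ Lg α, ∀ y ∈ Lg β, ∀ z ∈ Lg γ,
      br k (br h x y) z
        = br h x (br k y z) + ((-1 : K) ^ (β.val * γ.val)) • br k (br h x z) y)
    (V : Type*) [AddCommGroup V] [Module K V]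
    (Vg : ZMod 2 → Submodule K V) (hVdec : IsCompl (Vg 0) (Vg 1))
    (f : S → L →ₗ[K] Module.End K V)
    (hmod1 : ∀ (h k : S) (α β : ZMod 2), ∀ x ∈ Lg α, ∀ y ∈ Lg β,
      f h (br k x y)
        = f h x * f k y - ((-1 : K) ^ (α.val * β.val)) • (f h y * f k x))
    (hmod2 : ∀ (h k : S) (α β : ZMod 2), ∀ x ∈ Lg α, ∀ y ∈ Lg β,
      f k x * f h y = f h x * f k y) :
    ∀ (s : S) (x : L) (v : V), v ∈ superModAnn1 K Lg Vg f →
      f s x v ∈ superModAnn1 K Lg Vg f := by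
  exact stmt_16_general (iSup_eq_top_of_codisjoint hdec.codisjoint)
    (iSup_eq_top_of_codisjoint hVdec.codisjoint) hmod2
end
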